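/- arXiv:2411.02701 — 3 statements merged into one kernel-verified Lean document; each statement's English description precedes it below -/
import Mathlib

section
/- Core pointwise Fourier-side decay estimate for the linearized compressible Navier–Stokes–Coriolis system (main estimate in the proof of Lemma 3.2): there exist constants C > 0 and c > 0 depending only on μ such that for every β ≥ 1, every ε > 0, every Ω ∈ ℝ, and every ξ ∈ ℝ³ with ξ ≠ 0 and |ξ| ≤ 2β/ε, every solution (â, û) of the Fourier-transformed linearized system with forcing (f̂, ĝ) satisfies, for all t ≥ 0, |(â(t), û(t))| ≤ C e^{−cκt/β²} |(â(0), û(0))| + C ∫₀ᵗ e^{−cκ(t−τ)/β²} |(f̂(τ), ĝ(τ))| dτ, where κ = |ξ|⁴/(Ω²ε² + |ξ|²). -/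
noncomputable section
open scoped BigOperators

/-- Hermitian inner product on `ℂ³`: `⟨v,w⟩ = ∑ₖ vₖ · conj(wₖ)`. -/
def hinner (v w : Fin 3 → ℂ) : ℂ := ∑ k, v k * (starRingEnd ℂ) (w k)

/-- Squared norm `‖w‖² = ∑ₖ |wₖ|²` on `ℂ³`. -/
def vnormSq (w : Fin 3 → ℂ) : ℝ := ∑ k, ‖w k‖ ^ 2

/-- Norm `‖w‖` on `ℂ³`. -/
def vnorm (w : Fin 3 → ℂ) : ℝ := Real.sqrt (vnormSq w)

/-- `|(z,w)| = √(|z|² + ‖w‖²)` for `z ∈ ℂ`, `w ∈ ℂ³`. -/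
def pairNorm (z : ℂ) (w : Fin 3 → ℂ) : ℝ := Real.sqrt (‖z‖ ^ 2 + vnormSq w)

/-- Cross product with `e₃ = (0,0,1)`: `e₃ × w = (−w₂, w₁, 0)`. -/
def cross3 (w : Fin 3 → ℂ) : Fin 3 → ℂ := ![-(w 1), w 0, 0]

/-- `|ξ|² = ∑ₖ ξₖ²` for `ξ ∈ ℝ³`. -/
def xiNormSq (ξ : Fin 3 → ℝ) : ℝ := ∑ k, (ξ k) ^ 2

/-- Euclidean norm `|ξ|` for `ξ ∈ ℝ³`. -/
def xiNorm (ξ : Fin 3 → ℝ) : ℝ := Real.sqrt (xiNormSq ξ)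

/-- `ξ·w = ∑ₖ ξₖ wₖ` for `ξ ∈ ℝ³` regarded in `ℂ³` and `w ∈ ℂ³`. -/
def xiDot (ξ : Fin 3 → ℝ) (w : Fin 3 → ℂ) : ℂ := ∑ k, (ξ k : ℂ) * w k

/-- The Fourier-transformed linearized compressible Navier–Stokes–Coriolis system
at time `t` with data `(â, û)`, derivatives `(â', û')` and forcing `(f̂, ĝ)`:
`â′ + (i/ε)(ξ·û) = f̂` and
`û′ + μ|ξ|²û + (μ+μ′)(ξ·û)ξ + Ω(e₃ × û) + (i/ε)âξ = ĝ`. -/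
def SystemAt (μ μ' ε Ω : ℝ) (ξ : Fin 3 → ℝ)
    (a a' : ℝ → ℂ) (u u' : ℝ → Fin 3 → ℂ)
    (f : ℝ → ℂ) (g : ℝ → Fin 3 → ℂ) (t : ℝ) : Prop :=
  (a' t + (Complex.I / (ε : ℂ)) * xiDot ξ (u t) = f t) ∧
  (∀ k, u' t k + ((μ * xiNormSq ξ : ℝ) : ℂ) * u t k
      + (((μ + μ') : ℝ) : ℂ) * xiDot ξ (u t) * (ξ k : ℂ)
      + ((Ω : ℝ) : ℂ) * cross3 (u t) k
      + (Complex.I / (ε : ℂ)) * a t * (ξ k : ℂ) = g t k)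

/-- `κ(|ξ|, Ωε) = |ξ|⁴/(Ω²ε² + |ξ|²)`. -/
def kappa (Ω ε : ℝ) (ξ : Fin 3 → ℝ) : ℝ :=
  xiNorm ξ ^ 4 / (Ω ^ 2 * ε ^ 2 + xiNorm ξ ^ 2)

/-- Gronwall-type lemma. -/
lemma gronwall_sqrt (L L' φ : ℝ → ℝ) (lam : ℝ)
    (hL : ∀ t, 0 ≤ t → HasDerivAt L (L' t) t) (hL0 : ∀ t, 0 ≤ t → 0 ≤ L t)
    (hφ : ContinuousOn φ (Set.Ici 0)) (hφ0 : ∀ t, 0 ≤ t → 0 ≤ φ t)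
    (hd : ∀ t, 0 ≤ t → L' t ≤ -(2 * lam) * L t + 2 * φ t * Real.sqrt (L t))
    (t : ℝ) (ht : 0 ≤ t) :
    Real.sqrt (L t) ≤ Real.exp (-lam * t) * Real.sqrt (L 0)
      + ∫ s in (0:ℝ)..t, Real.exp (-lam * (t - s)) * φ s := by
  have hexp : ∀ s : ℝ, Real.exp (2 * lam * s) = Real.exp (lam * s) ^ 2 := by
    intro s; rw [← Real.exp_nat_mul]; congr 1; push_cast; ring
  have hP : ∀ s, 0 ≤ s → HasDerivAt (fun s => Real.exp (2 * lam * s) * L s)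
      (Real.exp (2 * lam * s) * (L' s + 2 * lam * L s)) s := by
    intro s hs
    have h1 : HasDerivAt (fun s : ℝ => Real.exp (2 * lam * s))
        (Real.exp (2 * lam * s) * (2 * lam)) s := by
      have := ((hasDerivAt_id s).const_mul (2 * lam)).exp
      simpa using this
    exact (h1.mul (hL s hs)).congr_deriv (by ring)
  have hcont : ContinuousOn (fun s => Real.exp (lam * s) * φ s) (Set.Icc 0 t) := by
    apply ContinuousOn.mul (by fun_prop)
    exact hφ.mono Set.Icc_subset_Ici_self
  have key : ∀ η : ℝ, 0 < η → Real.exp (lam * t) * Real.sqrt (L t) ≤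
      (Real.sqrt (L 0) + ∫ s in (0:ℝ)..t, Real.exp (lam * s) * φ s) + η := by
    intro η hη
    have hpos : ∀ s, 0 ≤ s → 0 < Real.exp (2 * lam * s) * L s + η ^ 2 := by
      intro s hs
      have := hL0 s hs
      positivity
    have hQ : ∀ s, 0 ≤ s → HasDerivAt (fun s => Real.sqrt (Real.exp (2 * lam * s) * L s + η ^ 2))
        (Real.exp (2 * lam * s) * (L' s + 2 * lam * L s) /
          (2 * Real.sqrt (Real.exp (2 * lam * s) * L s + η ^ 2))) s := by
      intro s hs
      exact ((hP s hs).add_const (η ^ 2)).sqrt (hpos s hs).ne'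
    have hmain := intervalIntegral.sub_le_integral_of_hasDeriv_right_of_le ht
      (g := fun s => Real.sqrt (Real.exp (2 * lam * s) * L s + η ^ 2))
      (g' := fun s => Real.exp (2 * lam * s) * (L' s + 2 * lam * L s) /
          (2 * Real.sqrt (Real.exp (2 * lam * s) * L s + η ^ 2)))
      (φ := fun s => Real.exp (lam * s) * φ s)
      (fun s hs => (hQ s hs.1).continuousAt.continuousWithinAt)
      (fun s hs => (hQ s hs.1.le).hasDerivWithinAt)
      hcont.integrableOn_Icc
      (by
        intro s hs
        have hs0 : 0 ≤ s := hs.1.le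
        have hp := hpos s hs0
        have hsq := Real.sqrt_pos.2 hp
        rw [div_le_iff₀ (by positivity)]
        have hle : Real.exp (lam * s) * Real.sqrt (L s) ≤
            Real.sqrt (Real.exp (2 * lam * s) * L s + η ^ 2) := by
          apply Real.le_sqrt_of_sq_le
          rw [mul_pow, Real.sq_sqrt (hL0 s hs0), hexp]
          nlinarith [sq_nonneg η]
        have h2 : L' s + 2 * lam * L s ≤ 2 * φ s * Real.sqrt (L s) := by
          linarith [hd s hs0]
        have he := Real.exp_pos (lam * s)
        calc Real.exp (2 * lam * s) * (L' s + 2 * lam * L s)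
            ≤ Real.exp (2 * lam * s) * (2 * φ s * Real.sqrt (L s)) := by gcongr
          _ = (2 * (Real.exp (lam * s) * φ s)) * (Real.exp (lam * s) * Real.sqrt (L s)) := by
              rw [hexp]; ring
          _ ≤ (2 * (Real.exp (lam * s) * φ s)) *
              Real.sqrt (Real.exp (2 * lam * s) * L s + η ^ 2) := by
              have := hφ0 s hs0
              gcongr
          _ = _ := by ring)
    have h0 : Real.sqrt (Real.exp (2 * lam * 0) * L 0 + η ^ 2) ≤ Real.sqrt (L 0) + η := by
      rw [Real.sqrt_le_left (by positivity)]
      have := Real.sq_sqrt (hL0 0 le_rfl)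
      have h3 := Real.sqrt_nonneg (L 0)
      simp only [mul_zero, Real.exp_zero, one_mul]
      nlinarith [mul_nonneg h3 hη.le]
    have h1 : Real.exp (lam * t) * Real.sqrt (L t) ≤
            Real.sqrt (Real.exp (2 * lam * t) * L t + η ^ 2) := by
      apply Real.le_sqrt_of_sq_le
      rw [mul_pow, Real.sq_sqrt (hL0 t ht), hexp]
      nlinarith [sq_nonneg η]
    linarith
  have key2 := le_of_forall_pos_le_add key
  have he : Real.exp (-lam * t) * Real.exp (lam * t) = 1 := by
    rw [← Real.exp_add]; simp
  have hint : ∫ s in (0:ℝ)..t, Real.exp (-lam * (t - s)) * φ s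
      = Real.exp (-lam * t) * ∫ s in (0:ℝ)..t, Real.exp (lam * s) * φ s := by
    rw [← intervalIntegral.integral_const_mul]
    congr 1; funext s
    rw [← mul_assoc, ← Real.exp_add]; congr 2; ring
  rw [hint, ← mul_add]
  calc Real.sqrt (L t) = Real.exp (-lam * t) * (Real.exp (lam * t) * Real.sqrt (L t)) := by
        rw [← mul_assoc, he, one_mul]
    _ ≤ _ := by gcongr

lemma cauchy3 (x1 x2 x3 p1 p2 p3 : ℝ) :
    (x1 * p1 + x2 * p2 + x3 * p3) ^ 2 ≤ (x1^2+x2^2+x3^2) * (p1^2+p2^2+p3^2) := by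
  nlinarith [sq_nonneg (x1*p2-x2*p1), sq_nonneg (x1*p3-x3*p1), sq_nonneg (x2*p3-x3*p2)]

lemma cauchy2 (x1 x2 p1 p2 : ℝ) :
    (x1 * p1 + x2 * p2) ^ 2 ≤ (x1^2+x2^2) * (p1^2+p2^2) := by
  nlinarith [sq_nonneg (x1*p2-x2*p1)]

/-- bound for a pairing `(ξ·v) conj(i b)`. -/
lemma pairing (x1 x2 x3 p1 p2 p3 q1 q2 q3 a1 a2 : ℝ) :
    ((x1*q1+x2*q2+x3*q3) * a1 - (x1*p1+x2*p2+x3*p3) * a2) ^ 2 ≤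
      (x1^2+x2^2+x3^2) * (p1^2+p2^2+p3^2+q1^2+q2^2+q3^2) * (a1^2+a2^2) := by
  have h1 := cauchy3 x1 x2 x3 p1 p2 p3
  have h2 := cauchy3 x1 x2 x3 q1 q2 q3
  have h3 := cauchy2 (x1*q1+x2*q2+x3*q3) (x1*p1+x2*p2+x3*p3) a1 (-a2)
  have h4 : ((x1*q1+x2*q2+x3*q3)^2 + (x1*p1+x2*p2+x3*p3)^2) * (a1^2+a2^2) ≤
      ((x1^2+x2^2+x3^2) * (p1^2+p2^2+p3^2+q1^2+q2^2+q3^2)) * (a1^2+a2^2) := by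
    gcongr
    linarith
  have h5 : ((x1*q1+x2*q2+x3*q3) * a1 - (x1*p1+x2*p2+x3*p3) * a2) ^ 2
    = ((x1*q1+x2*q2+x3*q3) * a1 + (x1*p1+x2*p2+x3*p3) * (-a2)) ^ 2 := by ring
  rw [h5]
  refine h3.trans ?_
  rw [neg_sq]; exact h4

set_option maxHeartbeats 2000000 in
/-- Scalar part of the estimate. -/
lemma scalar_bound (m μ ε Ω β R N A W X Z S T1 T2 nF nU δ K c0 : ℝ)
    (hm : 0 < m) (hm1 : m ≤ 1) (hmμ : m ≤ μ) (hε : 0 < ε) (hβ : 1 ≤ β) (hR : 0 < R)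
    (hRβ : R * ε ^ 2 ≤ 4 * β ^ 2) (hN : 0 ≤ N) (hA : 0 ≤ A) (hW : 0 ≤ W) (hWN : W ≤ R * N)
    (hX : X ^ 2 ≤ R * N * A) (hZ : Z ^ 2 ≤ R * N * A)
    (hnF : 0 ≤ nF) (hnU : 0 ≤ nU) (hU : nU ^ 2 = A + N)
    (hS : |S| ≤ nF * nU) (hT1 : |T1| ≤ Real.sqrt R * (nF * nU))
    (hT2 : |T2| ≤ Real.sqrt R * (nF * nU))
    (hc0 : c0 = m / 12) (hδ : δ = c0 * ε * R / (β ^ 2 * (Ω ^ 2 * ε ^ 2 + R)))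
    (hK : K = R ^ 2 / (Ω ^ 2 * ε ^ 2 + R) / β ^ 2) :
    let L := (A + N) / 2 + δ * X
    let L' := -(μ * R * N + (1 - μ) * W) - δ * ε⁻¹ * R * A + δ * ε⁻¹ * W - δ * (R * X + Ω * Z)
      + S + δ * (T1 + T2)
    (A + N) / 4 ≤ L ∧ L ≤ A + N ∧ L' ≤ -(2 * (c0 / 4 * K)) * L + 2 * (2 * nF) * Real.sqrt L := by
  intro L L'
  have hc0p : 0 < c0 := by rw [hc0]; positivity
  have hD : 0 < Ω ^ 2 * ε ^ 2 + R := by positivity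
  have hβ2 : 1 ≤ β ^ 2 := by nlinarith
  have hD1 : R ≤ β ^ 2 * (Ω ^ 2 * ε ^ 2 + R) := by nlinarith [mul_nonneg (sq_nonneg Ω) (sq_nonneg ε)]
  have hDp : 0 < β ^ 2 * (Ω ^ 2 * ε ^ 2 + R) := by positivity
  have hδp : 0 < δ := by rw [hδ]; positivity
  have hKp : 0 < K := by rw [hK]; positivity
  have hKR : K ≤ R := by
    rw [hK, div_div, div_le_iff₀ (by positivity)]
    nlinarith
  have hδK : δ * ε⁻¹ * R = c0 * K := by
    rw [hδ, hK]; field_simp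
  have hδε : δ * ε⁻¹ ≤ c0 := by
    have : δ * ε⁻¹ = c0 * R / (β ^ 2 * (Ω ^ 2 * ε ^ 2 + R)) := by rw [hδ]; field_simp
    rw [this, div_le_iff₀ hDp]
    gcongr
  have hδεR : δ * ε * R ≤ 4 * c0 := by
    have : δ * ε * R = c0 * R * (R * ε ^ 2) / (β ^ 2 * (Ω ^ 2 * ε ^ 2 + R)) := by
      rw [hδ]; field_simp
    rw [this, div_le_iff₀ hDp]
    have h1 : c0 * R * (R * ε ^ 2) ≤ c0 * R * (4 * β ^ 2) := by gcongr
    have h2 : 0 ≤ c0 * β ^ 2 * (Ω ^ 2 * ε ^ 2) := by positivity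
    nlinarith
  have hδεΩ : δ * ε * Ω ^ 2 ≤ c0 * R := by
    have : δ * ε * Ω ^ 2 = c0 * R * (Ω ^ 2 * ε ^ 2) / (β ^ 2 * (Ω ^ 2 * ε ^ 2 + R)) := by
      rw [hδ]; field_simp
    rw [this, div_le_iff₀ hDp]
    have h0 : 0 ≤ Ω ^ 2 * ε ^ 2 := by positivity
    have h1 : Ω ^ 2 * ε ^ 2 ≤ β ^ 2 * (Ω ^ 2 * ε ^ 2 + R) := by nlinarith
    gcongr
  have hr0 := Real.sqrt_nonneg R
  have hr2 := Real.sq_sqrt hR.le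
  have hδr : δ * Real.sqrt R ≤ 1 / 4 := by
    -- (δ r)² = (δ/ε)(δ ε R) ≤ 4 c0²
    have h1 : (δ * Real.sqrt R) ^ 2 ≤ (1 / 4) ^ 2 := by
      have e1 : (δ * Real.sqrt R) ^ 2 = (δ * ε⁻¹) * (δ * ε * R) := by
        rw [mul_pow, hr2]; field_simp
      rw [e1]
      calc (δ * ε⁻¹) * (δ * ε * R) ≤ c0 * (4 * c0) := by gcongr
        _ ≤ _ := by
          have hc1 : c0 ≤ 1 / 12 := by rw [hc0]; linarith
          nlinarith
    exact abs_le_of_sq_le_sq h1 (by norm_num) |> le_trans (le_abs_self _)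
  have hXb : |X| ≤ Real.sqrt R * ((A + N) / 2) := by
    apply abs_le_of_sq_le_sq _ (by positivity)
    rw [mul_pow, hr2]
    refine hX.trans ?_
    nlinarith [mul_nonneg hR.le (sq_nonneg (A - N))]
  have hδX : |δ * X| ≤ (A + N) / 8 := by
    rw [abs_mul, abs_of_pos hδp]
    calc δ * |X| ≤ δ * (Real.sqrt R * ((A + N) / 2)) := by gcongr
      _ = (δ * Real.sqrt R) * ((A + N) / 2) := by ring
      _ ≤ (1/4) * ((A + N) / 2) := by gcongr
      _ = _ := by ring
  obtain ⟨hδX1, hδX2⟩ := abs_le.1 hδX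
  have hL1 : (A + N) / 4 ≤ L := by simp only [L]; linarith
  have hL2 : L ≤ A + N := by simp only [L]; linarith
  refine ⟨hL1, hL2, ?_⟩
  -- Young
  have hY1 : |X| ≤ ε⁻¹ * A / 4 + ε * R * N := by
    apply abs_le_of_sq_le_sq _ (by positivity)
    have e : (ε⁻¹ * A / 4 + ε * R * N) ^ 2 = (ε⁻¹ * A / 4 - ε * R * N) ^ 2 + R * N * A := by
      field_simp; ring
    rw [e]; nlinarith [sq_nonneg (ε⁻¹ * A / 4 - ε * R * N)]
  have hY2 : |Ω * Z| ≤ R * (ε⁻¹ * A) / 4 + ε * Ω ^ 2 * N := by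
    apply abs_le_of_sq_le_sq _ (by positivity)
    have e : (R * (ε⁻¹ * A) / 4 + ε * Ω ^ 2 * N) ^ 2
        = (R * (ε⁻¹ * A) / 4 - ε * Ω ^ 2 * N) ^ 2 + Ω ^ 2 * (R * N * A) := by
      field_simp; ring
    rw [e, mul_pow]
    have := mul_le_mul_of_nonneg_left hZ (sq_nonneg Ω)
    nlinarith [sq_nonneg (R * (ε⁻¹ * A) / 4 - ε * Ω ^ 2 * N)]
  have hcross : -(δ * (R * X + Ω * Z)) ≤ c0 * K * A / 2 + 5 * c0 * R * N := by
    have h1 : -(R * X + Ω * Z) ≤ R * (ε⁻¹ * A / 4 + ε * R * N) + (R * (ε⁻¹ * A) / 4 + ε * Ω ^ 2 * N) := by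
      have := (abs_le.1 hY1).1
      have h2 := (abs_le.1 hY2).1
      nlinarith
    have h2 := mul_le_mul_of_nonneg_left h1 hδp.le
    have h3 : δ * (R * (ε⁻¹ * A / 4 + ε * R * N) + (R * (ε⁻¹ * A) / 4 + ε * Ω ^ 2 * N))
        = (δ * ε⁻¹ * R) * A / 2 + (δ * ε * R) * (R * N) + (δ * ε * Ω ^ 2) * N := by ring
    have h4 : (δ * ε * R) * (R * N) ≤ 4 * c0 * (R * N) := by gcongr
    have h5 : (δ * ε * Ω ^ 2) * N ≤ c0 * R * N := by gcongr
    rw [h3, hδK] at h2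
    linarith
  have hW1 : δ * ε⁻¹ * W ≤ c0 * (R * N) := by gcongr
  have hdis : m * (R * N) ≤ μ * R * N + (1 - μ) * W := by
    have hRN : 0 ≤ R * N := by positivity
    rcases le_total μ 1 with h | h
    · nlinarith [mul_nonneg (sub_nonneg.2 h) hW, mul_nonneg (sub_nonneg.2 hmμ) hRN]
    · nlinarith [mul_nonneg (sub_nonneg.2 h) (sub_nonneg.2 hWN), mul_nonneg (sub_nonneg.2 hm1) hRN]
  have hFU : 0 ≤ nF * nU := by positivity
  have hforce : S + δ * (T1 + T2) ≤ 2 * (nF * nU) := by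
    have h1 : δ * (T1 + T2) ≤ δ * (2 * (Real.sqrt R * (nF * nU))) := by
      gcongr
      linarith [le_abs_self T1, le_abs_self T2]
    have h2 : δ * (2 * (Real.sqrt R * (nF * nU))) = (δ * Real.sqrt R) * (2 * (nF * nU)) := by ring
    have h3 : (δ * Real.sqrt R) * (2 * (nF * nU)) ≤ 1 / 4 * (2 * (nF * nU)) := by gcongr
    linarith [le_abs_self S]
  have hnUL : nU ≤ 2 * Real.sqrt L := by
    have hL0 : 0 ≤ L := by linarith [add_nonneg hA hN]
    have : nU ^ 2 ≤ (2 * Real.sqrt L) ^ 2 := by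
      rw [mul_pow, Real.sq_sqrt hL0, hU]; linarith
    exact abs_le_of_sq_le_sq this (by positivity) |> le_trans (le_abs_self _)
  have hforce2 : 2 * (nF * nU) ≤ 2 * (2 * nF) * Real.sqrt L := by
    have := mul_le_mul_of_nonneg_left hnUL hnF
    linarith
  have hKN : c0 * K * N ≤ c0 * (R * N) := by
    rw [mul_assoc]; gcongr
  have hKL : c0 * K * L ≤ c0 * K * (A + N) := by gcongr
  have hfin : L' ≤ -(m * (R * N)) - c0 * K * A + c0 * (R * N) + (c0 * K * A / 2 + 5 * c0 * R * N)
      + 2 * (nF * nU) := by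
    simp only [L']; rw [hδK]; linarith
  have : m * (R * N) = 12 * (c0 * (R * N)) := by rw [hc0]; ring
  have h0 : 0 ≤ c0 * K * A := by positivity
  have h00 : 0 ≤ c0 * (R * N) := by positivity
  linarith

/-- Real-coordinates form of the differential inequality. -/
lemma real_bound (m μ μ' ε Ω β R δ K c0 x1 x2 x3 a1 a2 p1 p2 p3 q1 q2 q3
    a1' a2' p1' p2' p3' q1' q2' q3' f1 f2 g1 g2 g3 h1 h2 h3 nF nU : ℝ)
    (hm : 0 < m) (hm1 : m ≤ 1) (hmμ : m ≤ μ) (hμ' : 2 * μ + μ' = 1) (hε : 0 < ε) (hβ : 1 ≤ β)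
    (hR : R = x1 ^ 2 + x2 ^ 2 + x3 ^ 2) (hRpos : 0 < R) (hRβ : R * ε ^ 2 ≤ 4 * β ^ 2)
    (hF0 : 0 ≤ nF) (hU0 : 0 ≤ nU)
    (hF : nF ^ 2 = f1 ^ 2 + f2 ^ 2 + (g1 ^ 2 + g2 ^ 2 + g3 ^ 2 + h1 ^ 2 + h2 ^ 2 + h3 ^ 2))
    (hU : nU ^ 2 = a1 ^ 2 + a2 ^ 2 + (p1 ^ 2 + p2 ^ 2 + p3 ^ 2 + q1 ^ 2 + q2 ^ 2 + q3 ^ 2))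
    (hc0 : c0 = m / 12) (hδ : δ = c0 * ε * R / (β ^ 2 * (Ω ^ 2 * ε ^ 2 + R)))
    (hK : K = R ^ 2 / (Ω ^ 2 * ε ^ 2 + R) / β ^ 2)
    (e1 : a1' = f1 + ε⁻¹ * (x1 * q1 + x2 * q2 + x3 * q3))
    (e2 : a2' = f2 - ε⁻¹ * (x1 * p1 + x2 * p2 + x3 * p3))
    (e3 : p1' = g1 - μ * R * p1 - (1 - μ) * (x1 * p1 + x2 * p2 + x3 * p3) * x1 + Ω * p2
      + ε⁻¹ * a2 * x1)
    (e4 : q1' = h1 - μ * R * q1 - (1 - μ) * (x1 * q1 + x2 * q2 + x3 * q3) * x1 + Ω * q2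
      - ε⁻¹ * a1 * x1)
    (e5 : p2' = g2 - μ * R * p2 - (1 - μ) * (x1 * p1 + x2 * p2 + x3 * p3) * x2 - Ω * p1
      + ε⁻¹ * a2 * x2)
    (e6 : q2' = h2 - μ * R * q2 - (1 - μ) * (x1 * q1 + x2 * q2 + x3 * q3) * x2 - Ω * q1
      - ε⁻¹ * a1 * x2)
    (e7 : p3' = g3 - μ * R * p3 - (1 - μ) * (x1 * p1 + x2 * p2 + x3 * p3) * x3
      + ε⁻¹ * a2 * x3)
    (e8 : q3' = h3 - μ * R * q3 - (1 - μ) * (x1 * q1 + x2 * q2 + x3 * q3) * x3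
      - ε⁻¹ * a1 * x3)
    (L L' : ℝ)
    (hL : L = (a1 * a1 + a2 * a2 + (p1 * p1 + p2 * p2 + p3 * p3 + q1 * q1 + q2 * q2 + q3 * q3)) / 2
      + δ * ((x1 * q1 + x2 * q2 + x3 * q3) * a1 - (x1 * p1 + x2 * p2 + x3 * p3) * a2))
    (hL' : L' = (a1' * a1 + a2' * a2 + (p1' * p1 + p2' * p2 + p3' * p3 + q1' * q1 + q2' * q2
      + q3' * q3)) + δ * ((x1 * q1' + x2 * q2' + x3 * q3') * a1
        + (x1 * q1 + x2 * q2 + x3 * q3) * a1'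
        - ((x1 * p1' + x2 * p2' + x3 * p3') * a2 + (x1 * p1 + x2 * p2 + x3 * p3) * a2'))) :
    nU ^ 2 / 4 ≤ L ∧ L ≤ nU ^ 2 ∧
      L' ≤ -(2 * (c0 / 4 * K)) * L + 2 * (2 * nF) * Real.sqrt L := by
  have hA : 0 ≤ a1 ^ 2 + a2 ^ 2 := by positivity
  have hN : 0 ≤ p1 ^ 2 + p2 ^ 2 + p3 ^ 2 + q1 ^ 2 + q2 ^ 2 + q3 ^ 2 := by positivity
  have hW : 0 ≤ (x1 * p1 + x2 * p2 + x3 * p3) ^ 2 + (x1 * q1 + x2 * q2 + x3 * q3) ^ 2 := by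
    positivity
  have hWN : (x1 * p1 + x2 * p2 + x3 * p3) ^ 2 + (x1 * q1 + x2 * q2 + x3 * q3) ^ 2 ≤
      R * (p1 ^ 2 + p2 ^ 2 + p3 ^ 2 + q1 ^ 2 + q2 ^ 2 + q3 ^ 2) := by
    rw [hR]
    linarith [cauchy3 x1 x2 x3 p1 p2 p3, cauchy3 x1 x2 x3 q1 q2 q3]
  have hX := pairing x1 x2 x3 p1 p2 p3 q1 q2 q3 a1 a2
  rw [← hR] at hX
  have hZ : ((x1 * (-q2) + x2 * q1 + x3 * 0) * a1 - (x1 * (-p2) + x2 * p1 + x3 * 0) * a2) ^ 2 ≤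
      R * (p1 ^ 2 + p2 ^ 2 + p3 ^ 2 + q1 ^ 2 + q2 ^ 2 + q3 ^ 2) * (a1 ^ 2 + a2 ^ 2) := by
    have h := pairing x1 x2 x3 (-p2) p1 0 (-q2) q1 0 a1 a2
    rw [← hR] at h
    refine h.trans ?_
    refine mul_le_mul_of_nonneg_right (mul_le_mul_of_nonneg_left ?_ hRpos.le) hA
    linarith [sq_nonneg p3, sq_nonneg q3]
  have hS : |f1 * a1 + f2 * a2 + (g1 * p1 + g2 * p2 + g3 * p3 + h1 * q1 + h2 * q2 + h3 * q3)|
      ≤ nF * nU := by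
    apply abs_le_of_sq_le_sq _ (by positivity)
    have h := Finset.sum_mul_sq_le_sq_mul_sq Finset.univ ![f1, f2, g1, g2, g3, h1, h2, h3]
      ![a1, a2, p1, p2, p3, q1, q2, q3]
    simp [Fin.sum_univ_succ] at h
    rw [mul_pow, hF, hU]
    convert h using 1 <;> ring
  have hr2 := Real.sq_sqrt hRpos.le
  have hT1 : |(x1 * h1 + x2 * h2 + x3 * h3) * a1 - (x1 * g1 + x2 * g2 + x3 * g3) * a2|
      ≤ Real.sqrt R * (nF * nU) := by
    apply abs_le_of_sq_le_sq _ (by positivity)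
    have h := pairing x1 x2 x3 g1 g2 g3 h1 h2 h3 a1 a2
    rw [← hR] at h
    refine h.trans ?_
    rw [mul_pow, mul_pow, hr2, ← mul_assoc, hF, hU]
    refine mul_le_mul (mul_le_mul_of_nonneg_left ?_ hRpos.le) ?_ hA (by positivity)
    · linarith [sq_nonneg f1, sq_nonneg f2]
    · linarith
  have hT2 : |(x1 * q1 + x2 * q2 + x3 * q3) * f1 - (x1 * p1 + x2 * p2 + x3 * p3) * f2|
      ≤ Real.sqrt R * (nF * nU) := by
    apply abs_le_of_sq_le_sq _ (by positivity)
    have h := pairing x1 x2 x3 p1 p2 p3 q1 q2 q3 f1 f2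
    rw [← hR] at h
    refine h.trans ?_
    rw [mul_pow, mul_pow, hr2, mul_comm (nF ^ 2), ← mul_assoc, hF, hU]
    have hG : 0 ≤ g1 ^ 2 + g2 ^ 2 + g3 ^ 2 + h1 ^ 2 + h2 ^ 2 + h3 ^ 2 := by positivity
    refine mul_le_mul (mul_le_mul_of_nonneg_left ?_ hRpos.le) ?_ (by positivity) (by positivity)
    · linarith
    · linarith
  have hmain := scalar_bound m μ ε Ω β R _ _ _ _ _ _ _ _ nF nU δ K c0 hm hm1 hmμ hε hβ hRpos hRβ
    hN hA hW hWN hX hZ hF0 hU0 hU hS hT1 hT2 hc0 hδ hK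
  simp only at hmain
  have hLe : L = (a1 ^ 2 + a2 ^ 2 + (p1 ^ 2 + p2 ^ 2 + p3 ^ 2 + q1 ^ 2 + q2 ^ 2 + q3 ^ 2)) / 2
      + δ * ((x1 * q1 + x2 * q2 + x3 * q3) * a1 - (x1 * p1 + x2 * p2 + x3 * p3) * a2) := by
    rw [hL]; ring
  rw [← hLe, ← hU] at hmain
  refine ⟨hmain.1, hmain.2.1, le_trans (le_of_eq ?_) hmain.2.2⟩
  rw [hL', e1, e2, e3, e4, e5, e6, e7, e8, hR]
  ring

set_option maxHeartbeats 2000000 in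
/-- Core pointwise Fourier-side decay estimate for the linearized compressible
Navier–Stokes–Coriolis system (main estimate (ene-low) in the proof of Lemma 3.2):
there exist `C, c > 0` depending only on `μ` such that for every `β ≥ 1`, `ε > 0`,
`Ω ∈ ℝ`, `ξ ≠ 0` with `|ξ| ≤ 2β/ε`, every solution of the Fourier-transformed
linearized system satisfies
`|(â(t),û(t))| ≤ C e^{−cκt/β²}|(â(0),û(0))| + C ∫₀ᵗ e^{−cκ(t−τ)/β²}|(f̂(τ),ĝ(τ))| dτ`,
where `κ = |ξ|⁴/(Ω²ε² + |ξ|²)`. -/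
theorem fourier_pointwise_decay :
    ∀ μ : ℝ, 0 < μ →
    ∃ C : ℝ, 0 < C ∧ ∃ c : ℝ, 0 < c ∧
      ∀ (μ' ε Ω β : ℝ) (ξ : Fin 3 → ℝ)
        (a a' f : ℝ → ℂ) (u u' g : ℝ → Fin 3 → ℂ),
        2 * μ + μ' = 1 → 0 < ε → 1 ≤ β →
        ξ ≠ 0 → xiNorm ξ ≤ 2 * β / ε →
        (∀ t : ℝ, 0 ≤ t → HasDerivAt a (a' t) t) →
        (∀ t : ℝ, 0 ≤ t → HasDerivAt u (u' t) t) →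
        ContinuousOn f (Set.Ici 0) →
        ContinuousOn g (Set.Ici 0) →
        (∀ t : ℝ, 0 ≤ t → SystemAt μ μ' ε Ω ξ a a' u u' f g t) →
        ∀ t : ℝ, 0 ≤ t →
          pairNorm (a t) (u t)
            ≤ C * Real.exp (-(c * kappa Ω ε ξ / β ^ 2) * t) * pairNorm (a 0) (u 0)
              + C * ∫ τ in (0:ℝ)..t,
                  Real.exp (-(c * kappa Ω ε ξ / β ^ 2) * (t - τ)) * pairNorm (f τ) (g τ) := by
  intro μ hμ
  set m := min 1 μ with hmdef
  have hm : 0 < m := lt_min one_pos hμ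
  refine ⟨4, by norm_num, m / 12 / 4, by positivity, ?_⟩
  intro μ' ε Ω β ξ a a' f u u' g hμ' hε hβ hξ hξβ ha hu hf hg hsys t ht
  obtain ⟨x1, hx1⟩ : ∃ x, x = ξ 0 := ⟨_, rfl⟩
  obtain ⟨x2, hx2⟩ : ∃ x, x = ξ 1 := ⟨_, rfl⟩
  obtain ⟨x3, hx3⟩ : ∃ x, x = ξ 2 := ⟨_, rfl⟩
  have hRdef : xiNormSq ξ = x1 ^ 2 + x2 ^ 2 + x3 ^ 2 := by
    simp [xiNormSq, Fin.sum_univ_three, hx1, hx2, hx3]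
  obtain ⟨R, hR⟩ : ∃ R, R = x1 ^ 2 + x2 ^ 2 + x3 ^ 2 := ⟨_, rfl⟩
  have hR' : xiNormSq ξ = R := by rw [hRdef, hR]
  have hRpos : 0 < R := by
    obtain ⟨k, hk⟩ := Function.ne_iff.1 hξ
    rw [← hR', xiNormSq]
    exact Finset.sum_pos' (fun i _ => sq_nonneg _)
      ⟨k, Finset.mem_univ _, lt_of_le_of_ne (sq_nonneg _) (Ne.symm (pow_ne_zero 2 hk))⟩
  have hn2 : xiNorm ξ ^ 2 = R := by rw [xiNorm, hR', Real.sq_sqrt hRpos.le]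
  have hn4 : xiNorm ξ ^ 4 = R ^ 2 := by rw [← hn2]; ring
  have hRβ : R * ε ^ 2 ≤ 4 * β ^ 2 := by
    have h0 : 0 ≤ xiNorm ξ := Real.sqrt_nonneg _
    rw [le_div_iff₀ hε] at hξβ
    have h1 : (xiNorm ξ * ε) ^ 2 ≤ (2 * β) ^ 2 := by gcongr
    rw [mul_pow, hn2] at h1
    linarith
  obtain ⟨c0, hc0⟩ : ∃ c0, c0 = m / 12 := ⟨_, rfl⟩
  obtain ⟨δ, hδ⟩ : ∃ δ, δ = c0 * ε * R / (β ^ 2 * (Ω ^ 2 * ε ^ 2 + R)) := ⟨_, rfl⟩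
  obtain ⟨K, hK⟩ : ∃ K, K = R ^ 2 / (Ω ^ 2 * ε ^ 2 + R) / β ^ 2 := ⟨_, rfl⟩
  have hlam : m / 12 / 4 * kappa Ω ε ξ / β ^ 2 = c0 / 4 * K := by
    rw [kappa, hn4, hn2, hK, hc0]; ring
  rw [hlam]
  have hμ2 : μ + μ' = 1 - μ := by linarith
  have hre : ∀ (z : ℝ → ℂ) (z' : ℂ) (s : ℝ), HasDerivAt z z' s →
      HasDerivAt (fun s => (z s).re) z'.re s := fun z z' s h => by
    exact (Complex.reCLM.hasFDerivAt.comp_hasDerivAt s h)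
  have him : ∀ (z : ℝ → ℂ) (z' : ℂ) (s : ℝ), HasDerivAt z z' s →
      HasDerivAt (fun s => (z s).im) z'.im s := fun z z' s h => by
    exact (Complex.imCLM.hasFDerivAt.comp_hasDerivAt s h)
  have hpair : ∀ (z : ℂ) (w : Fin 3 → ℂ), pairNorm z w ^ 2 = z.re ^ 2 + z.im ^ 2 +
      ((w 0).re ^ 2 + (w 1).re ^ 2 + (w 2).re ^ 2 + (w 0).im ^ 2 + (w 1).im ^ 2 + (w 2).im ^ 2) := by
    intro z w
    have h0 : 0 ≤ ‖z‖ ^ 2 + vnormSq w := by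
      rw [vnormSq]; positivity
    rw [pairNorm, Real.sq_sqrt h0, vnormSq, Fin.sum_univ_three]
    simp only [Complex.sq_norm, Complex.normSq_apply]
    ring
  have hpair0 : ∀ (z : ℂ) (w : Fin 3 → ℂ), 0 ≤ pairNorm z w := fun z w => Real.sqrt_nonneg _
  obtain ⟨L, hLdef⟩ : ∃ L : ℝ → ℝ, L = fun s =>
    ((a s).re * (a s).re + (a s).im * (a s).im + ((u s 0).re * (u s 0).re + (u s 1).re * (u s 1).re
      + (u s 2).re * (u s 2).re + (u s 0).im * (u s 0).im + (u s 1).im * (u s 1).im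
      + (u s 2).im * (u s 2).im)) / 2
    + δ * ((x1 * (u s 0).im + x2 * (u s 1).im + x3 * (u s 2).im) * (a s).re
      - (x1 * (u s 0).re + x2 * (u s 1).re + x3 * (u s 2).re) * (a s).im) := ⟨_, rfl⟩
  obtain ⟨L', hL'def⟩ : ∃ L' : ℝ → ℝ, L' = fun s =>
    ((a' s).re * (a s).re + (a' s).im * (a s).im + ((u' s 0).re * (u s 0).re
      + (u' s 1).re * (u s 1).re
      + (u' s 2).re * (u s 2).re + (u' s 0).im * (u s 0).im + (u' s 1).im * (u s 1).im
      + (u' s 2).im * (u s 2).im))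
    + δ * ((x1 * (u' s 0).im + x2 * (u' s 1).im + x3 * (u' s 2).im) * (a s).re
      + (x1 * (u s 0).im + x2 * (u s 1).im + x3 * (u s 2).im) * (a' s).re
      - ((x1 * (u' s 0).re + x2 * (u' s 1).re + x3 * (u' s 2).re) * (a s).im
        + (x1 * (u s 0).re + x2 * (u s 1).re + x3 * (u s 2).re) * (a' s).im)) := ⟨_, rfl⟩
  have hLd : ∀ s, 0 ≤ s → HasDerivAt L (L' s) s := by
    intro s hs
    have hu1 := hasDerivAt_pi.1 (hu s hs)
    have dA := hre _ _ _ (ha s hs)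
    have dB := him _ _ _ (ha s hs)
    have p0 := hre _ _ _ (hu1 0)
    have p1 := hre _ _ _ (hu1 1)
    have p2 := hre _ _ _ (hu1 2)
    have q0 := him _ _ _ (hu1 0)
    have q1 := him _ _ _ (hu1 1)
    have q2 := him _ _ _ (hu1 2)
    have h1 := (((dA.mul dA).add (dB.mul dB)).add ((((((p0.mul p0).add (p1.mul p1)).add
      (p2.mul p2)).add (q0.mul q0)).add (q1.mul q1)).add (q2.mul q2))).div_const 2
    have h2 := (((((q0.const_mul x1).add (q1.const_mul x2)).add (q2.const_mul x3)).mul dA).sub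
      ((((p0.const_mul x1).add (p1.const_mul x2)).add (p2.const_mul x3)).mul dB)).const_mul δ
    have h3 := h1.add h2
    rw [hLdef, hL'def]
    refine HasDerivAt.congr_deriv h3 ?_
    simp only [Pi.add_apply]
    ring
  have hkey : ∀ s, 0 ≤ s → pairNorm (a s) (u s) ^ 2 / 4 ≤ L s ∧ L s ≤ pairNorm (a s) (u s) ^ 2 ∧
      L' s ≤ -(2 * (c0 / 4 * K)) * L s + 2 * (2 * pairNorm (f s) (g s)) * Real.sqrt (L s) := by
    intro s hs
    obtain ⟨hs1, hs2⟩ := hsys s hs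
    have k0 := hs2 0
    have k1 := hs2 1
    have k2 := hs2 2
    have hI : Complex.I / (ε : ℂ) = Complex.I * ((ε⁻¹ : ℝ) : ℂ) := by
      push_cast; rw [div_eq_mul_inv]
    rw [hI] at hs1 k0 k1 k2
    rw [hR', hμ2] at k0 k1 k2
    have hdot : xiDot ξ (u s) = (x1 : ℂ) * u s 0 + (x2 : ℂ) * u s 1 + (x3 : ℂ) * u s 2 := by
      simp [xiDot, Fin.sum_univ_three, hx1, hx2, hx3]
    rw [hdot] at hs1 k0 k1 k2
    rw [← hx1] at k0
    rw [← hx2] at k1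
    rw [← hx3] at k2
    have c0' : cross3 (u s) 0 = - u s 1 := rfl
    have c1' : cross3 (u s) 1 = u s 0 := rfl
    have c2' : cross3 (u s) 2 = 0 := rfl
    rw [c0'] at k0
    rw [c1'] at k1
    rw [c2'] at k2
    have e1 := congrArg Complex.re hs1
    have e2 := congrArg Complex.im hs1
    have e3 := congrArg Complex.re k0
    have e4 := congrArg Complex.im k0
    have e5 := congrArg Complex.re k1
    have e6 := congrArg Complex.im k1
    have e7 := congrArg Complex.re k2
    have e8 := congrArg Complex.im k2
    simp only [Complex.add_re, Complex.add_im, Complex.mul_re, Complex.mul_im, Complex.ofReal_re,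
      Complex.ofReal_im, Complex.I_re, Complex.I_im, Complex.neg_re, Complex.neg_im,
      Complex.zero_re, Complex.zero_im] at e1 e2 e3 e4 e5 e6 e7 e8
    have hF := hpair (f s) (g s)
    have hU := hpair (a s) (u s)
    have hF0 := hpair0 (f s) (g s)
    have hU0 := hpair0 (a s) (u s)
    rw [hLdef, hL'def]
    simp only
    generalize pairNorm (f s) (g s) = nF at *
    generalize pairNorm (a s) (u s) = nU at *
    exact real_bound m μ μ' ε Ω β R δ K c0 x1 x2 x3 (a s).re (a s).im (u s 0).re (u s 1).re
      (u s 2).re (u s 0).im (u s 1).im (u s 2).im (a' s).re (a' s).im (u' s 0).re (u' s 1).re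
      (u' s 2).re (u' s 0).im (u' s 1).im (u' s 2).im (f s).re (f s).im (g s 0).re (g s 1).re
      (g s 2).re (g s 0).im (g s 1).im (g s 2).im nF nU hm (min_le_left _ _) (min_le_right _ _)
      hμ' hε hβ hR hRpos hRβ hF0 hU0 hF hU hc0 hδ hK (by linear_combination e1)
      (by linear_combination e2) (by linear_combination e3) (by linear_combination e4)
      (by linear_combination e5) (by linear_combination e6) (by linear_combination e7)
      (by linear_combination e8)
      _ _ rfl rfl
  have hFcont : ContinuousOn (fun s => 2 * pairNorm (f s) (g s)) (Set.Ici 0) := by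
    have hgk : ∀ k, ContinuousOn (fun s => g s k) (Set.Ici 0) := fun k =>
      (continuous_apply k).comp_continuousOn hg
    unfold pairNorm vnormSq
    refine ContinuousOn.mul continuousOn_const (ContinuousOn.sqrt ?_)
    refine (hf.norm.pow 2).add (continuousOn_finset_sum _ fun k _ => ((hgk k).norm.pow 2))
  have hgr := gronwall_sqrt L L' (fun s => 2 * pairNorm (f s) (g s)) (c0 / 4 * K) hLd
    (fun s hs => le_trans (by positivity) (hkey s hs).1) hFcont
    (fun s _ => by have := hpair0 (f s) (g s); positivity)
    (fun s hs => (hkey s hs).2.2) t ht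
  have hl : pairNorm (a t) (u t) ≤ 2 * Real.sqrt (L t) := by
    have h1 := (hkey t ht).1
    have h2 : (pairNorm (a t) (u t) / 2) ≤ Real.sqrt (L t) := by
      apply Real.le_sqrt_of_sq_le
      rw [div_pow]; linarith
    linarith
  have hr : Real.sqrt (L 0) ≤ pairNorm (a 0) (u 0) :=
    (Real.sqrt_le_left (hpair0 _ _)).2 (hkey 0 le_rfl).2.1
  have hint : ∫ s in (0:ℝ)..t, Real.exp (-(c0 / 4 * K) * (t - s)) * (2 * pairNorm (f s) (g s))
      = 2 * ∫ s in (0:ℝ)..t, Real.exp (-(c0 / 4 * K) * (t - s)) * pairNorm (f s) (g s) := by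
    rw [← intervalIntegral.integral_const_mul]
    congr 1; funext s; ring
  rw [hint] at hgr
  have he := Real.exp_pos (-(c0 / 4 * K) * t)
  have h5 := mul_le_mul_of_nonneg_left hr he.le
  have h6 := mul_nonneg he.le (hpair0 (a 0) (u 0))
  linarith
end
end

section
/- Cross-term differential inequality (first inequality of (pf:ene-low-4) in the proof of Lemma 3.2): for every ξ ∈ ℝ³ and every solution (â, û) of the Fourier-transformed linearized system with forcing (f̂, ĝ), one has for all t ≥ 0: d/dt Re⟨iε â(t) ξ, û(t)⟩ + |ξ|²|â(t)|² ≤ ε|ξ|·|(f̂(t), ĝ(t))|·|(â(t), û(t))| + |Ω|ε|ξ|·|â(t)|·‖û(t)‖ + |ξ|²‖û(t)‖² + ε|ξ|³·|â(t)|·‖û(t)‖. -/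
noncomputable section
open scoped BigOperators

lemma xiNorm_sq_aux (ξ : Fin 3 → ℝ) : xiNorm ξ ^ 2 = xiNormSq ξ :=
  Real.sq_sqrt (Finset.sum_nonneg fun _ _ => sq_nonneg _)

lemma vnormSq_nonneg_aux (w : Fin 3 → ℂ) : 0 ≤ vnormSq w :=
  Finset.sum_nonneg fun _ _ => sq_nonneg _

lemma vnorm_sq_aux (w : Fin 3 → ℂ) : vnorm w ^ 2 = vnormSq w :=
  Real.sq_sqrt (vnormSq_nonneg_aux w)

lemma norm_xiDot_le_aux (ξ : Fin 3 → ℝ) (w : Fin 3 → ℂ) :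
    ‖xiDot ξ w‖ ≤ xiNorm ξ * vnorm w := by
  have h1 : ‖xiDot ξ w‖ ≤ ∑ k, |ξ k| * ‖w k‖ := by
    refine (norm_sum_le _ _).trans (le_of_eq ?_)
    simp
  refine h1.trans ?_
  have h2 := Real.sum_mul_le_sqrt_mul_sqrt Finset.univ (fun k => |ξ k|) (fun k => ‖w k‖)
  simpa [xiNorm, xiNormSq, vnorm, vnormSq] using h2

lemma vnorm_cross3_le_aux (w : Fin 3 → ℂ) : vnorm (cross3 w) ≤ vnorm w := by
  apply Real.sqrt_le_sqrt
  simp only [vnormSq, cross3, Fin.sum_univ_three]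
  simp
  nlinarith [sq_nonneg ‖w 2‖]

lemma pair_cs_aux (f a : ℂ) (g u : Fin 3 → ℂ) :
    ‖f‖ * vnorm u + ‖a‖ * vnorm g ≤ pairNorm f g * pairNorm a u := by
  unfold pairNorm
  rw [← Real.sqrt_mul (by have := vnormSq_nonneg_aux g; positivity)]
  apply Real.le_sqrt_of_sq_le
  rw [← vnorm_sq_aux, ← vnorm_sq_aux]
  nlinarith [sq_nonneg (‖f‖ * ‖a‖ - vnorm g * vnorm u)]

lemma re_le_aux (ε : ℝ) (hε : 0 < ε) (x y : ℂ) :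
    |(Complex.I * (ε : ℂ) * x * (starRingEnd ℂ) y).re| ≤ ε * (‖x‖ * ‖y‖) := by
  refine (Complex.abs_re_le_norm _).trans (le_of_eq ?_)
  simp [abs_of_pos hε]
  ring

/-- Cross-term differential inequality (first inequality of (pf:ene-low-4) in the proof of
Lemma 3.2): `d/dt Re⟨iε â ξ, û⟩ + |ξ|²|â|²
  ≤ ε|ξ||(f̂,ĝ)||(â,û)| + |Ω|ε|ξ||â|‖û‖ + |ξ|²‖û‖² + ε|ξ|³|â|‖û‖`. -/
theorem fourier_cross_term_inequality
    (μ μ' ε Ω : ℝ) (hμ : 0 < μ) (hμ' : 2 * μ + μ' = 1) (hε : 0 < ε)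
    (ξ : Fin 3 → ℝ)
    (a a' f : ℝ → ℂ) (u u' g : ℝ → Fin 3 → ℂ)
    (ha : ∀ t : ℝ, 0 ≤ t → HasDerivAt a (a' t) t)
    (hu : ∀ t : ℝ, 0 ≤ t → HasDerivAt u (u' t) t)
    (hf : ContinuousOn f (Set.Ici 0))
    (hg : ContinuousOn g (Set.Ici 0))
    (hsys : ∀ t : ℝ, 0 ≤ t → SystemAt μ μ' ε Ω ξ a a' u u' f g t) :
    ∀ t : ℝ, 0 ≤ t → ∀ D : ℝ,
      HasDerivAt
        (fun s => (hinner (fun k => Complex.I * (ε : ℂ) * a s * (ξ k : ℂ)) (u s)).re) D t →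
      D + xiNormSq ξ * ‖a t‖ ^ 2
        ≤ ε * xiNorm ξ * pairNorm (f t) (g t) * pairNorm (a t) (u t)
          + |Ω| * ε * xiNorm ξ * ‖a t‖ * vnorm (u t)
          + xiNormSq ξ * vnormSq (u t)
          + ε * xiNorm ξ ^ 3 * ‖a t‖ * vnorm (u t) := by
  intro t ht D hD
  obtain ⟨h1, h2⟩ := hsys t ht
  have hu' : ∀ k, HasDerivAt (fun s => u s k) (u' t k) t := hasDerivAt_pi.1 (hu t ht)
  have hεc : (ε : ℂ) ≠ 0 := by exact_mod_cast hε.ne'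
  have hS : HasDerivAt (fun s => xiDot ξ (u s)) (xiDot ξ (u' t)) t := by
    unfold xiDot
    exact HasDerivAt.fun_sum fun k _ => (hu' k).const_mul _
  have hF : HasDerivAt
      (fun s => Complex.I * (ε : ℂ) * a s * (starRingEnd ℂ) (xiDot ξ (u s)))
      (Complex.I * (ε : ℂ) * a' t * (starRingEnd ℂ) (xiDot ξ (u t))
        + Complex.I * (ε : ℂ) * a t * (starRingEnd ℂ) (xiDot ξ (u' t))) t :=
    ((ha t ht).const_mul _).mul hS.star
  have hre := Complex.reCLM.hasFDerivAt.comp_hasDerivAt t hF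
  have hEq : (fun s => (hinner (fun k => Complex.I * (ε : ℂ) * a s * (ξ k : ℂ)) (u s)).re)
      = Complex.reCLM ∘
        (fun s => Complex.I * (ε : ℂ) * a s * (starRingEnd ℂ) (xiDot ξ (u s))) := by
    funext s
    rw [Function.comp_apply, Complex.reCLM_apply]
    congr 1
    simp only [hinner, xiDot, map_sum, map_mul, Complex.conj_ofReal, Finset.mul_sum]
    exact Finset.sum_congr rfl fun k _ => by ring
  rw [hEq] at hD
  have hDv := hD.unique hre
  rw [Complex.reCLM_apply] at hDv
  have ha' : a' t = f t - (Complex.I / (ε : ℂ)) * xiDot ξ (u t) := by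
    rw [← h1]; ring
  have hS' : xiDot ξ (u' t) = xiDot ξ (g t) - ((xiNormSq ξ : ℝ) : ℂ) * xiDot ξ (u t)
      - (Ω : ℂ) * xiDot ξ (cross3 (u t))
      - (Complex.I / (ε : ℂ)) * a t * ((xiNormSq ξ : ℝ) : ℂ) := by
    have hm : ((μ' : ℝ) : ℂ) = 1 - 2 * (μ : ℂ) := by
      have : μ' = 1 - 2 * μ := by linarith
      rw [this]; push_cast; ring
    have hg' : xiDot ξ (g t) = xiDot ξ (u' t)
        + ((μ * xiNormSq ξ : ℝ) : ℂ) * xiDot ξ (u t)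
        + (((μ + μ') : ℝ) : ℂ) * xiDot ξ (u t) * ((xiNormSq ξ : ℝ) : ℂ)
        + (Ω : ℂ) * xiDot ξ (cross3 (u t))
        + (Complex.I / (ε : ℂ)) * a t * ((xiNormSq ξ : ℝ) : ℂ) := by
      generalize hs : xiDot ξ (u t) = S at h2 ⊢
      simp only [xiDot, Fin.sum_univ_three] at hs
      simp only [xiDot, Fin.sum_univ_three, ← h2]
      rw [← hs]
      simp only [xiNormSq, Fin.sum_univ_three]
      push_cast
      ring
    rw [hg']
    push_cast
    rw [hm]
    ring
  set S := xiDot ξ (u t) with hSdef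
  set G := xiDot ξ (g t) with hGdef
  set C := xiDot ξ (cross3 (u t)) with hCdef
  set N := xiNormSq ξ with hN
  have key : D + N * ‖a t‖ ^ 2 = ‖S‖ ^ 2
      + (Complex.I * (ε : ℂ) * f t * (starRingEnd ℂ) S).re
      + (Complex.I * (ε : ℂ) * a t * (starRingEnd ℂ) G).re
      - N * (Complex.I * (ε : ℂ) * a t * (starRingEnd ℂ) S).re
      - Ω * (Complex.I * (ε : ℂ) * a t * (starRingEnd ℂ) C).re := by
    have e : Complex.I * (ε : ℂ) * a' t * (starRingEnd ℂ) S
        + Complex.I * (ε : ℂ) * a t * (starRingEnd ℂ) (xiDot ξ (u' t))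
        = S * (starRingEnd ℂ) S
          + Complex.I * (ε : ℂ) * f t * (starRingEnd ℂ) S
          + Complex.I * (ε : ℂ) * a t * (starRingEnd ℂ) G
          - (N : ℂ) * (Complex.I * (ε : ℂ) * a t * (starRingEnd ℂ) S)
          - (Ω : ℂ) * (Complex.I * (ε : ℂ) * a t * (starRingEnd ℂ) C)
          - (N : ℂ) * (a t * (starRingEnd ℂ) (a t)) := by
      rw [ha', hS']
      simp only [map_sub, map_mul, map_div₀, Complex.conj_I, Complex.conj_ofReal]
      field_simp
      ring_nf
      simp only [Complex.I_sq]
      ring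
    rw [e, Complex.mul_conj, Complex.mul_conj] at hDv
    rw [hDv, Complex.normSq_eq_norm_sq, Complex.normSq_eq_norm_sq]
    simp only [Complex.sub_re, Complex.add_re, Complex.re_ofReal_mul, Complex.ofReal_re]
    ring
  rw [key]
  have x0 : 0 ≤ xiNorm ξ := Real.sqrt_nonneg _
  have u0 : 0 ≤ vnorm (u t) := Real.sqrt_nonneg _
  have hNx : N = xiNorm ξ ^ 2 := (xiNorm_sq_aux ξ).symm
  have bS : ‖S‖ ≤ xiNorm ξ * vnorm (u t) := norm_xiDot_le_aux _ _
  have bG : ‖G‖ ≤ xiNorm ξ * vnorm (g t) := norm_xiDot_le_aux _ _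
  have bC : ‖C‖ ≤ xiNorm ξ * vnorm (u t) := (norm_xiDot_le_aux _ _).trans
    (mul_le_mul_of_nonneg_left (vnorm_cross3_le_aux _) x0)
  have t1 : ‖S‖ ^ 2 ≤ N * vnormSq (u t) := by
    rw [hNx, ← vnorm_sq_aux, ← mul_pow]
    gcongr
  have t2 : (Complex.I * (ε : ℂ) * f t * (starRingEnd ℂ) S).re
      ≤ ε * (‖f t‖ * (xiNorm ξ * vnorm (u t))) :=
    (le_abs_self _).trans ((re_le_aux ε hε _ _).trans (by gcongr))
  have t3 : (Complex.I * (ε : ℂ) * a t * (starRingEnd ℂ) G).re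
      ≤ ε * (‖a t‖ * (xiNorm ξ * vnorm (g t))) :=
    (le_abs_self _).trans ((re_le_aux ε hε _ _).trans (by gcongr))
  have t4 : -(N * (Complex.I * (ε : ℂ) * a t * (starRingEnd ℂ) S).re)
      ≤ N * (ε * (‖a t‖ * (xiNorm ξ * vnorm (u t)))) := by
    rw [← mul_neg]
    have hN0 : 0 ≤ N := by rw [hNx]; positivity
    refine mul_le_mul_of_nonneg_left ?_ hN0
    exact (neg_le_abs _).trans ((re_le_aux ε hε _ _).trans (by gcongr))
  have t5 : -(Ω * (Complex.I * (ε : ℂ) * a t * (starRingEnd ℂ) C).re)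
      ≤ |Ω| * (ε * (‖a t‖ * (xiNorm ξ * vnorm (u t)))) := by
    refine (neg_le_abs _).trans ?_
    rw [abs_mul]
    refine mul_le_mul_of_nonneg_left ?_ (abs_nonneg _)
    exact (re_le_aux ε hε _ _).trans (by gcongr)
  have t6 := mul_le_mul_of_nonneg_left (pair_cs_aux (f t) (a t) (g t) (u t))
    (mul_nonneg hε.le x0)
  have t7 : N * (ε * (‖a t‖ * (xiNorm ξ * vnorm (u t))))
      = ε * xiNorm ξ ^ 3 * ‖a t‖ * vnorm (u t) := by rw [hNx]; ring
  linarith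
end
end

section
/- Exponential decay of the modified energy (estimate (pf:ene-low-10) in the proof of Lemma 3.2): let β ≥ 1, δ = μ̲/(16β²) with μ̲ = min{μ,1}, and let ξ ≠ 0 satisfy |ξ| ≤ 2β/ε. Then every solution (â, û) of the Fourier-transformed linearized system with forcing (f̂, ĝ) satisfies, for all t ≥ 0, V(t) ≤ e^{−(δ/3)κt}·V(0) + 4·√(Ω²ε² + |ξ|²)·∫₀ᵗ e^{−(δ/3)κ(t−τ)}·|(f̂(τ), ĝ(τ))| dτ, where V(t) is the nonnegative square root of V(t)² = (Ω²ε² + |ξ|²)·|(â(t), û(t))|² + 2δ|ξ|²·Re⟨iε â(t) ξ, û(t)⟩ and κ = |ξ|⁴/(Ω²ε² + |ξ|²). -/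
noncomputable section
open scoped BigOperators

lemma aux_sqrt_gronwall (W W' k : ℝ → ℝ) (lam : ℝ)
    (hW : ∀ t, 0 ≤ t → HasDerivAt W (W' t) t) (hW0 : ∀ t, 0 ≤ t → 0 ≤ W t)
    (hk : ContinuousOn k (Set.Ici 0)) (hk0 : ∀ t, 0 ≤ t → 0 ≤ k t)
    (hineq : ∀ t, 0 ≤ t → W' t / 2 ≤ -lam * W t + k t * Real.sqrt (W t)) :
    ∀ t, 0 ≤ t → Real.sqrt (W t) ≤ Real.exp (-lam * t) * Real.sqrt (W 0)
      + ∫ τ in (0:ℝ)..t, Real.exp (-lam * (t - τ)) * k τ := by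
  intro T hT
  set h : ℝ → ℝ := fun t => Real.exp (lam * t) * k (max 0 t) with hh
  have hkc : Continuous (fun t : ℝ => k (max 0 t)) :=
    hk.comp_continuous (by fun_prop) (fun t => by simp)
  have hhc : Continuous h := by
    rw [hh]; exact (by fun_prop : Continuous fun t : ℝ => Real.exp (lam * t)).mul hkc
  set y : ℝ → ℝ := fun t => Real.exp (lam * t) ^ 2 * W t with hy
  have hexp : ∀ t, HasDerivAt (fun t => Real.exp (lam * t)) (Real.exp (lam * t) * lam) t := by
    intro t
    have := ((hasDerivAt_id t).const_mul lam).exp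
    simpa using this
  have hyd : ∀ t, 0 ≤ t → HasDerivAt y
      (2 * Real.exp (lam * t) ^ 2 * (lam * W t + W' t / 2)) t := by
    intro t ht
    have := ((hexp t).pow 2).mul (hW t ht)
    refine this.congr_deriv ?_
    simp
    ring
  have hy0 : ∀ t, 0 ≤ t → 0 ≤ y t := fun t ht => mul_nonneg (by positivity) (hW0 t ht)
  have hysq : ∀ t, 0 ≤ t → Real.sqrt (y t) = Real.exp (lam * t) * Real.sqrt (W t) := by
    intro t ht
    rw [hy]
    simp only
    rw [Real.sqrt_mul (by positivity), Real.sqrt_sq (Real.exp_pos _).le]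
  have hyb : ∀ t, 0 ≤ t → 2 * Real.exp (lam * t) ^ 2 * (lam * W t + W' t / 2)
      ≤ 2 * h t * Real.sqrt (y t) := by
    intro t ht
    rw [hysq t ht, hh]
    simp only [max_eq_right ht]
    have := hineq t ht
    have h2 : 0 ≤ 2 * Real.exp (lam * t) ^ 2 := by positivity
    calc _ ≤ 2 * Real.exp (lam * t) ^ 2 * (k t * Real.sqrt (W t)) :=
          mul_le_mul_of_nonneg_left (by linarith) h2
      _ = _ := by ring
  have key : ∀ η : ℝ, 0 < η → Real.sqrt (y T + η) ≤ Real.sqrt (y 0 + η) + ∫ τ in (0:ℝ)..T, h τ := by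
    intro η hη
    have hGd : ∀ t, 0 ≤ t → HasDerivAt (fun t => (∫ τ in (0:ℝ)..t, h τ) - Real.sqrt (y t + η))
        (h t - (2 * Real.exp (lam * t) ^ 2 * (lam * W t + W' t / 2)) / (2 * Real.sqrt (y t + η))) t := by
      intro t ht
      have h1 := intervalIntegral.integral_hasDerivAt_right (hhc.intervalIntegrable 0 t)
        (hhc.stronglyMeasurableAtFilter _ _) hhc.continuousAt
      have h2 := ((hyd t ht).add_const η).sqrt (by have := hy0 t ht; positivity)
      exact h1.sub h2
    have hmono : MonotoneOn (fun t => (∫ τ in (0:ℝ)..t, h τ) - Real.sqrt (y t + η)) (Set.Ici 0) := by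
      apply monotoneOn_of_deriv_nonneg (convex_Ici 0)
      · intro t ht
        exact (hGd t ht).continuousAt.continuousWithinAt
      · intro t ht
        rw [interior_Ici] at ht
        exact (hGd t (le_of_lt ht)).differentiableAt.differentiableWithinAt
      · intro t ht
        rw [interior_Ici] at ht
        have ht' : 0 ≤ t := le_of_lt ht
        rw [(hGd t ht').deriv, sub_nonneg]
        have hpos : 0 < Real.sqrt (y t + η) := Real.sqrt_pos.2 (by have := hy0 t ht'; linarith)
        rw [div_le_iff₀ (by positivity)]
        have hle : Real.sqrt (y t) ≤ Real.sqrt (y t + η) := Real.sqrt_le_sqrt (by linarith)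
        have hh0 : 0 ≤ h t := mul_nonneg (Real.exp_pos _).le (hk0 _ (by simp))
        have := hyb t ht'
        nlinarith [mul_le_mul_of_nonneg_left hle hh0]
    have := hmono (Set.mem_Ici.2 le_rfl) (Set.mem_Ici.2 hT) hT
    simp only [intervalIntegral.integral_same] at this
    linarith
  have key0 : Real.sqrt (y T) ≤ Real.sqrt (y 0) + ∫ τ in (0:ℝ)..T, h τ := by
    have c1 : Filter.Tendsto (fun η : ℝ => Real.sqrt (y T + η)) (nhdsWithin 0 (Set.Ioi 0))
        (nhds (Real.sqrt (y T + 0))) :=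
      ((by fun_prop : Continuous fun η : ℝ => Real.sqrt (y T + η)).tendsto 0).mono_left
        nhdsWithin_le_nhds
    have c2 : Filter.Tendsto (fun η : ℝ => Real.sqrt (y 0 + η) + ∫ τ in (0:ℝ)..T, h τ)
        (nhdsWithin 0 (Set.Ioi 0)) (nhds (Real.sqrt (y 0 + 0) + ∫ τ in (0:ℝ)..T, h τ)) :=
      ((by fun_prop : Continuous fun η : ℝ =>
        Real.sqrt (y 0 + η) + ∫ τ in (0:ℝ)..T, h τ).tendsto 0).mono_left nhdsWithin_le_nhds
    have := le_of_tendsto_of_tendsto c1 c2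
      (Filter.eventually_of_mem self_mem_nhdsWithin fun η hη => key η hη)
    simpa using this
  rw [hysq T hT, hysq 0 le_rfl] at key0
  simp only [mul_zero, Real.exp_zero, one_mul] at key0
  have hint : ∫ τ in (0:ℝ)..T, Real.exp (-lam * (T - τ)) * k τ
      = Real.exp (-lam * T) * ∫ τ in (0:ℝ)..T, h τ := by
    rw [← intervalIntegral.integral_const_mul]
    apply intervalIntegral.integral_congr
    intro τ hτ
    rw [Set.uIcc_of_le hT] at hτ
    simp only [hh, max_eq_right hτ.1]
    rw [← mul_assoc, ← Real.exp_add]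
    congr 2
    ring
  rw [hint, ← mul_add]
  have hE : Real.exp (-lam * T) * Real.exp (lam * T) = 1 := by
    rw [← Real.exp_add]; simp
  calc Real.sqrt (W T) = Real.exp (-lam * T) * (Real.exp (lam * T) * Real.sqrt (W T)) := by
        rw [← mul_assoc, hE, one_mul]
    _ ≤ _ := mul_le_mul_of_nonneg_left key0 (Real.exp_pos _).le

set_option maxHeartbeats 1000000 in
/-- The algebra of the dissipation, with `w = Ωε`, `s = |ξ|`. -/
lemma aux_dissipation (μ m β ε w s δ P U Dd X Z T1 T2 F : ℝ)
    (hm0 : 0 < m) (hm1 : m ≤ 1) (hmμ : m ≤ μ) (hmm : m = μ ∨ m = 1) (hε : 0 < ε) (hβ : 1 ≤ β)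
    (hδ : δ * (16 * β ^ 2) = m) (hs : 0 < s) (hse : s * ε ≤ 2 * β)
    (hP : 0 ≤ P) (hU : 0 ≤ U) (hF : 0 ≤ F)
    (hD0 : 0 ≤ Dd) (hD : Dd ≤ s ^ 2 * U)
    (hX : X ^ 2 ≤ ε ^ 2 * P * Dd) (hZ : Z ^ 2 ≤ P * (s ^ 2 * U))
    (hT1 : T1 ^ 2 ≤ F ^ 2 * (P + U)) (hT2 : T2 ^ 2 ≤ F ^ 2 * (ε ^ 2 * (Dd + s ^ 2 * P))) :
    0 ≤ (w ^ 2 + s ^ 2) * (P + U) + 2 * δ * s ^ 2 * X ∧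
    (w ^ 2 + s ^ 2) * (-μ * s ^ 2 * U - (1 - μ) * Dd)
      + δ * s ^ 2 * (Dd - s ^ 2 * P - s ^ 2 * X - w * Z) + (w ^ 2 + s ^ 2) * T1 + δ * s ^ 2 * T2
    ≤ - (δ / 3 * (s ^ 4 / (w ^ 2 + s ^ 2))) * ((w ^ 2 + s ^ 2) * (P + U) + 2 * δ * s ^ 2 * X)
      + 4 * Real.sqrt (w ^ 2 + s ^ 2) * F
        * Real.sqrt ((w ^ 2 + s ^ 2) * (P + U) + 2 * δ * s ^ 2 * X) := by
  have hβ2 : 1 ≤ β ^ 2 := by nlinarith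
  have hδ0 : 0 < δ := by
    by_contra hc
    push Not at hc
    nlinarith
  have hδm : δ * 16 ≤ m := by nlinarith
  have hse0 : 0 < s * ε := by positivity
  have hδse : δ * (s * ε) ≤ m / 8 := by
    have h1 : δ * (s * ε) ≤ δ * (2 * β) := mul_le_mul_of_nonneg_left hse hδ0.le
    have h2 : δ * (2 * β) ≤ δ * (2 * β ^ 2) := mul_le_mul_of_nonneg_left (by nlinarith) hδ0.le
    linarith
  have hδse2 : δ * (s * ε) ^ 2 ≤ m / 4 := by
    have h1 : (s * ε) ^ 2 ≤ (2 * β) ^ 2 := pow_le_pow_left₀ hse0.le hse 2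
    have h2 := mul_le_mul_of_nonneg_left h1 hδ0.le
    nlinarith
  set A := w ^ 2 + s ^ 2 with hA
  have hs2 : 0 < s ^ 2 := by positivity
  have hAs : s ^ 2 ≤ A := by nlinarith [sq_nonneg w]
  have hAw : w ^ 2 ≤ A := by nlinarith
  have hA0 : 0 < A := by linarith
  -- bounds on X
  have hXX : X ^ 2 ≤ (s * ε) ^ 2 * P * U := by
    have : ε ^ 2 * P * Dd ≤ ε ^ 2 * P * (s ^ 2 * U) := mul_le_mul_of_nonneg_left hD (by positivity)
    calc X ^ 2 ≤ _ := hX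
      _ ≤ _ := this
      _ = _ := by ring
  have hX1 : |X| ≤ P / 4 + (s * ε) ^ 2 * U := by
    apply abs_le_of_sq_le_sq _ (by positivity)
    have := sq_nonneg (P / 4 - (s * ε) ^ 2 * U)
    calc X ^ 2 ≤ (s * ε) ^ 2 * P * U := hXX
      _ = (P / 4 + (s * ε) ^ 2 * U) ^ 2 - (P / 4 - (s * ε) ^ 2 * U) ^ 2 := by ring
      _ ≤ _ := by linarith
  have hX2 : |X| ≤ s * ε * ((P + U) / 2) := by
    apply abs_le_of_sq_le_sq _ (by positivity)
    have : (s * ε) ^ 2 * (P * U) ≤ (s * ε) ^ 2 * ((P + U) / 2) ^ 2 :=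
      mul_le_mul_of_nonneg_left (by nlinarith [sq_nonneg (P - U)]) (by positivity)
    calc X ^ 2 ≤ (s * ε) ^ 2 * P * U := hXX
      _ = (s * ε) ^ 2 * (P * U) := by ring
      _ ≤ _ := this
      _ = _ := by ring
  have hZ1 : |w * Z| ≤ s ^ 2 * P / 4 + w ^ 2 * U := by
    apply abs_le_of_sq_le_sq _ (by positivity)
    have : w ^ 2 * Z ^ 2 ≤ w ^ 2 * (P * (s ^ 2 * U)) := mul_le_mul_of_nonneg_left hZ (by positivity)
    have h2 := sq_nonneg (s ^ 2 * P / 4 - w ^ 2 * U)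
    calc (w * Z) ^ 2 = w ^ 2 * Z ^ 2 := by ring
      _ ≤ w ^ 2 * (P * (s ^ 2 * U)) := this
      _ = (s ^ 2 * P / 4 + w ^ 2 * U) ^ 2 - (s ^ 2 * P / 4 - w ^ 2 * U) ^ 2 := by ring
      _ ≤ _ := by linarith
  have hδX : |2 * δ * s ^ 2 * X| ≤ A * (P + U) / 8 := by
    rw [abs_mul, abs_of_pos (by positivity : 0 < 2 * δ * s ^ 2)]
    calc 2 * δ * s ^ 2 * |X| ≤ 2 * δ * s ^ 2 * (s * ε * ((P + U) / 2)) :=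
          mul_le_mul_of_nonneg_left hX2 (by positivity)
      _ = (δ * (s * ε)) * (s ^ 2 * (P + U)) := by ring
      _ ≤ (1 / 8) * (s ^ 2 * (P + U)) := mul_le_mul_of_nonneg_right (by linarith) (by positivity)
      _ ≤ (1 / 8) * (A * (P + U)) := by gcongr
      _ = _ := by ring
  have hδX' := abs_le.1 hδX
  have hAE : 0 ≤ A * (P + U) := by positivity
  set W := A * (P + U) + 2 * δ * s ^ 2 * X with hWdef
  have hW0 : 0 ≤ W := by linarith [hδX'.1]
  refine ⟨hW0, ?_⟩
  -- kappa term
  have hkap : δ / 3 * (s ^ 4 / A) * W ≤ 3 / 8 * δ * s ^ 4 * (P + U) := by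
    calc δ / 3 * (s ^ 4 / A) * W ≤ δ / 3 * (s ^ 4 / A) * (9 / 8 * (A * (P + U))) :=
          mul_le_mul_of_nonneg_left (by linarith [hδX'.2]) (by positivity)
      _ = _ := by field_simp; ring
  -- viscosity
  have hvisc : m * s ^ 2 * U ≤ μ * s ^ 2 * U + (1 - μ) * Dd := by
    rcases hmm with h | h
    · subst h
      nlinarith
    · subst h
      nlinarith
  have hvisc' := mul_le_mul_of_nonneg_left hvisc hA0.le
  have hAU : s ^ 2 * (s ^ 2 * U) ≤ A * (s ^ 2 * U) := mul_le_mul_of_nonneg_right hAs (by positivity)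
  have hAUw : w ^ 2 * (s ^ 2 * U) ≤ A * (s ^ 2 * U) := mul_le_mul_of_nonneg_right hAw (by positivity)
  have hQ0 : 0 ≤ A * (s ^ 2 * U) := by positivity
  -- terms
  have t1 : δ * s ^ 2 * Dd ≤ m / 16 * (A * (s ^ 2 * U)) := by
    calc δ * s ^ 2 * Dd ≤ δ * s ^ 2 * (s ^ 2 * U) := mul_le_mul_of_nonneg_left hD (by positivity)
      _ = δ * (s ^ 2 * (s ^ 2 * U)) := by ring
      _ ≤ δ * (A * (s ^ 2 * U)) := mul_le_mul_of_nonneg_left hAU hδ0.le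
      _ ≤ _ := mul_le_mul_of_nonneg_right (by linarith) hQ0
  have t2 : -(δ * s ^ 2 * (s ^ 2 * X)) ≤ δ * s ^ 4 * P / 4 + m / 4 * (A * (s ^ 2 * U)) := by
    calc -(δ * s ^ 2 * (s ^ 2 * X)) = δ * s ^ 4 * (-X) := by ring
      _ ≤ δ * s ^ 4 * (P / 4 + (s * ε) ^ 2 * U) :=
          mul_le_mul_of_nonneg_left ((neg_le_abs X).trans hX1) (by positivity)
      _ = δ * s ^ 4 * P / 4 + (δ * (s * ε) ^ 2) * (s ^ 2 * (s ^ 2 * U)) := by ring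
      _ ≤ δ * s ^ 4 * P / 4 + m / 4 * (A * (s ^ 2 * U)) := by gcongr
  have t3 : -(δ * s ^ 2 * (w * Z)) ≤ δ * s ^ 4 * P / 4 + m / 16 * (A * (s ^ 2 * U)) := by
    calc -(δ * s ^ 2 * (w * Z)) = δ * s ^ 2 * (-(w * Z)) := by ring
      _ ≤ δ * s ^ 2 * (s ^ 2 * P / 4 + w ^ 2 * U) :=
          mul_le_mul_of_nonneg_left ((neg_le_abs _).trans hZ1) (by positivity)
      _ = δ * s ^ 4 * P / 4 + δ * (w ^ 2 * (s ^ 2 * U)) := by ring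
      _ ≤ δ * s ^ 4 * P / 4 + m / 16 * (A * (s ^ 2 * U)) := by
          gcongr
          linarith
  have t4 : 3 / 8 * δ * s ^ 4 * U ≤ 3 / 8 * (m / 16 * (A * (s ^ 2 * U))) := by
    calc 3 / 8 * δ * s ^ 4 * U = 3 / 8 * (δ * (s ^ 2 * (s ^ 2 * U))) := by ring
      _ ≤ 3 / 8 * (m / 16 * (A * (s ^ 2 * U))) := by
        gcongr
        linarith
  have hmQ : 0 ≤ m * (A * (s ^ 2 * U)) := by positivity
  have hdP : 0 ≤ δ * s ^ 4 * P := by positivity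
  -- forcing
  have hN0 := Real.sqrt_nonneg (P + U)
  have hN2 : Real.sqrt (P + U) ^ 2 = P + U := Real.sq_sqrt (by positivity)
  set N := Real.sqrt (P + U) with hN
  have hT1' : T1 ≤ F * N := by
    refine (le_abs_self _).trans (abs_le_of_sq_le_sq ?_ (by positivity))
    rw [mul_pow, hN2]; exact hT1
  have hT2' : T2 ≤ s * ε * (F * N) := by
    refine (le_abs_self _).trans (abs_le_of_sq_le_sq ?_ (by positivity))
    have : F ^ 2 * (ε ^ 2 * (Dd + s ^ 2 * P)) ≤ F ^ 2 * (ε ^ 2 * (s ^ 2 * U + s ^ 2 * P)) := by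
      gcongr
    rw [mul_pow, mul_pow, mul_pow, hN2]
    calc T2 ^ 2 ≤ _ := hT2
      _ ≤ _ := this
      _ = _ := by ring
  have hFN : 0 ≤ F * N := by positivity
  have f1 : A * T1 ≤ A * (F * N) := mul_le_mul_of_nonneg_left hT1' hA0.le
  have f2 : δ * s ^ 2 * T2 ≤ A * (F * N) := by
    calc δ * s ^ 2 * T2 ≤ δ * s ^ 2 * (s * ε * (F * N)) :=
          mul_le_mul_of_nonneg_left hT2' (by positivity)
      _ = (δ * (s * ε)) * (s ^ 2 * (F * N)) := by ring
      _ ≤ 1 * (A * (F * N)) := by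
          gcongr
          linarith
      _ = _ := one_mul _
  have hSA : Real.sqrt A ^ 2 = A := Real.sq_sqrt hA0.le
  have f3 : Real.sqrt A * N ≤ 2 * Real.sqrt W := by
    refine (abs_le_of_sq_le_sq' ?_ (by positivity)).2
    rw [mul_pow, mul_pow, hSA, hN2, Real.sq_sqrt hW0]
    linarith [hδX'.1]
  have f4 : 2 * (A * (F * N)) ≤ 4 * Real.sqrt A * F * Real.sqrt W := by
    have h0 : 0 ≤ 2 * Real.sqrt A * F := by positivity
    have := mul_le_mul_of_nonneg_left f3 h0
    calc 2 * (A * (F * N)) = 2 * (Real.sqrt A ^ 2 * (F * N)) := by rw [hSA]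
      _ = 2 * Real.sqrt A * F * (Real.sqrt A * N) := by ring
      _ ≤ _ := this
      _ = _ := by ring
  clear_value W
  have g1 : A * (-μ * s ^ 2 * U - (1 - μ) * Dd) ≤ -(m * (A * (s ^ 2 * U))) := by
    calc A * (-μ * s ^ 2 * U - (1 - μ) * Dd) = -(A * (μ * s ^ 2 * U + (1 - μ) * Dd)) := by ring
      _ ≤ -(A * (m * s ^ 2 * U)) := neg_le_neg hvisc'
      _ = _ := by ring
  have g2 : δ * s ^ 2 * (Dd - s ^ 2 * P - s ^ 2 * X - w * Z)
      = δ * s ^ 2 * Dd + -(δ * s ^ 2 * (s ^ 2 * X)) + -(δ * s ^ 2 * (w * Z)) - δ * s ^ 4 * P := by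
    ring
  have g3 : 3 / 8 * δ * s ^ 4 * (P + U) = 3 / 8 * (δ * s ^ 4 * P) + 3 / 8 * δ * s ^ 4 * U := by
    ring
  have g4 : -(δ / 3 * (s ^ 4 / A)) * W = -(δ / 3 * (s ^ 4 / A) * W) := by ring
  rw [g2, g4]
  rw [g3] at hkap
  clear_value A
  linarith

lemma aux_cs3 (a b c x y z : ℝ) :
    (a * x + b * y + c * z) ^ 2 ≤ (a ^ 2 + b ^ 2 + c ^ 2) * (x ^ 2 + y ^ 2 + z ^ 2) := by
  nlinarith [sq_nonneg (a * y - b * x), sq_nonneg (a * z - c * x), sq_nonneg (b * z - c * y)]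

lemma aux_cs8 (a b : Fin 8 → ℝ) :
    (a 0 * b 0 + a 1 * b 1 + a 2 * b 2 + a 3 * b 3 + a 4 * b 4 + a 5 * b 5 + a 6 * b 6
      + a 7 * b 7) ^ 2 ≤
    (a 0 ^ 2 + a 1 ^ 2 + a 2 ^ 2 + a 3 ^ 2 + a 4 ^ 2 + a 5 ^ 2 + a 6 ^ 2 + a 7 ^ 2) *
    (b 0 ^ 2 + b 1 ^ 2 + b 2 ^ 2 + b 3 ^ 2 + b 4 ^ 2 + b 5 ^ 2 + b 6 ^ 2 + b 7 ^ 2) := by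
  have := Finset.sum_mul_sq_le_sq_mul_sq Finset.univ a b
  simpa only [Fin.sum_univ_eight] using this

set_option maxHeartbeats 2000000 in
/-- The pointwise energy inequality in real coordinates. -/
lemma aux_pointwise (μ m β ε Ω s δ F x1 x2 x3 p q u1 v1 u2 v2 u3 v3 f1 f2 g1 h1 g2 h2 g3 h3
    p' q' u1' v1' u2' v2' u3' v3' : ℝ)
    (hm0 : 0 < m) (hm1 : m ≤ 1) (hmμ : m ≤ μ) (hmm : m = μ ∨ m = 1) (hε : 0 < ε) (hβ : 1 ≤ β)
    (hδ : δ * (16 * β ^ 2) = m) (hs : 0 < s) (hse : s * ε ≤ 2 * β)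
    (hsx : s ^ 2 = x1 ^ 2 + x2 ^ 2 + x3 ^ 2) (hF : 0 ≤ F)
    (hF2 : F ^ 2 = f1 ^ 2 + f2 ^ 2 + g1 ^ 2 + h1 ^ 2 + g2 ^ 2 + h2 ^ 2 + g3 ^ 2 + h3 ^ 2)
    (ep : p' = f1 + (x1 * v1 + x2 * v2 + x3 * v3) / ε)
    (eq : q' = f2 - (x1 * u1 + x2 * u2 + x3 * u3) / ε)
    (eu1 : u1' = g1 - μ * s ^ 2 * u1 - (1 - μ) * (x1 * u1 + x2 * u2 + x3 * u3) * x1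
      + Ω * u2 + q * x1 / ε)
    (ev1 : v1' = h1 - μ * s ^ 2 * v1 - (1 - μ) * (x1 * v1 + x2 * v2 + x3 * v3) * x1
      + Ω * v2 - p * x1 / ε)
    (eu2 : u2' = g2 - μ * s ^ 2 * u2 - (1 - μ) * (x1 * u1 + x2 * u2 + x3 * u3) * x2
      - Ω * u1 + q * x2 / ε)
    (ev2 : v2' = h2 - μ * s ^ 2 * v2 - (1 - μ) * (x1 * v1 + x2 * v2 + x3 * v3) * x2
      - Ω * v1 - p * x2 / ε)
    (eu3 : u3' = g3 - μ * s ^ 2 * u3 - (1 - μ) * (x1 * u1 + x2 * u2 + x3 * u3) * x3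
      + q * x3 / ε)
    (ev3 : v3' = h3 - μ * s ^ 2 * v3 - (1 - μ) * (x1 * v1 + x2 * v2 + x3 * v3) * x3
      - p * x3 / ε) :
    ∀ W, W = ((Ω * ε) ^ 2 + s ^ 2) * (p ^ 2 + q ^ 2
        + (u1 ^ 2 + v1 ^ 2 + u2 ^ 2 + v2 ^ 2 + u3 ^ 2 + v3 ^ 2))
      + 2 * δ * s ^ 2 * (ε * (p * (x1 * v1 + x2 * v2 + x3 * v3)
        - q * (x1 * u1 + x2 * u2 + x3 * u3))) →
    0 ≤ W ∧
    ((Ω * ε) ^ 2 + s ^ 2) * (p * p' + q * q'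
        + (u1 * u1' + v1 * v1' + u2 * u2' + v2 * v2' + u3 * u3' + v3 * v3'))
      + δ * s ^ 2 * (ε * (p' * (x1 * v1 + x2 * v2 + x3 * v3) + p * (x1 * v1' + x2 * v2' + x3 * v3')
        - q' * (x1 * u1 + x2 * u2 + x3 * u3) - q * (x1 * u1' + x2 * u2' + x3 * u3')))
    ≤ - (δ / 3 * (s ^ 4 / ((Ω * ε) ^ 2 + s ^ 2))) * W
      + 4 * Real.sqrt ((Ω * ε) ^ 2 + s ^ 2) * F * Real.sqrt W := by
  intro W hW
  have c1 := aux_cs3 x1 x2 x3 u1 u2 u3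
  have c2 := aux_cs3 x1 x2 x3 v1 v2 v3
  rw [← hsx] at c1 c2
  have c3 := aux_cs3 x1 x2 0 (-u2) u1 0
  have c4 := aux_cs3 x1 x2 0 (-v2) v1 0
  set dr := x1 * u1 + x2 * u2 + x3 * u3 with hdr
  set di := x1 * v1 + x2 * v2 + x3 * v3 with hdi
  set U := u1 ^ 2 + v1 ^ 2 + u2 ^ 2 + v2 ^ 2 + u3 ^ 2 + v3 ^ 2 with hU
  have hU0 : 0 ≤ U := by positivity
  set cr := -(x1 * u2) + x2 * u1 with hcr
  set ci := -(x1 * v2) + x2 * v1 with hci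
  have hD : dr ^ 2 + di ^ 2 ≤ s ^ 2 * U := by
    rw [hU]; linarith
  have hC : cr ^ 2 + ci ^ 2 ≤ s ^ 2 * U := by
    have k1 : (x1 ^ 2 + x2 ^ 2 + 0 ^ 2) * ((-u2) ^ 2 + u1 ^ 2 + 0 ^ 2)
        + (x1 ^ 2 + x2 ^ 2 + 0 ^ 2) * ((-v2) ^ 2 + v1 ^ 2 + 0 ^ 2)
        = (x1 ^ 2 + x2 ^ 2) * (u1 ^ 2 + v1 ^ 2 + u2 ^ 2 + v2 ^ 2) := by ring
    have k2 : (x1 ^ 2 + x2 ^ 2) * (u1 ^ 2 + v1 ^ 2 + u2 ^ 2 + v2 ^ 2) ≤ s ^ 2 * U := by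
      rw [hsx, hU]
      exact mul_le_mul (by linarith [sq_nonneg x3]) (by linarith [sq_nonneg u3, sq_nonneg v3])
        (by positivity) (by positivity)
    have k3 : cr = x1 * -u2 + x2 * u1 + 0 * 0 := by rw [hcr]; ring
    have k4 : ci = x1 * -v2 + x2 * v1 + 0 * 0 := by rw [hci]; ring
    rw [k3, k4]
    linarith
  have key := aux_dissipation μ m β ε (Ω * ε) s δ (p ^ 2 + q ^ 2) U (dr ^ 2 + di ^ 2)
    (ε * (p * di - q * dr)) (p * ci - q * cr)
    (f1 * p + f2 * q + g1 * u1 + h1 * v1 + g2 * u2 + h2 * v2 + g3 * u3 + h3 * v3)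
    (f1 * (ε * di) + f2 * (-(ε * dr)) + g1 * (-(ε * q * x1)) + h1 * (ε * p * x1)
      + g2 * (-(ε * q * x2)) + h2 * (ε * p * x2) + g3 * (-(ε * q * x3)) + h3 * (ε * p * x3)) F
    hm0 hm1 hmμ hmm hε hβ hδ hs hse (by positivity) hU0 hF (by positivity) hD
    (by
      have := mul_nonneg (sq_nonneg ε) (sq_nonneg (p * dr + q * di))
      calc (ε * (p * di - q * dr)) ^ 2 = ε ^ 2 * (p ^ 2 + q ^ 2) * (dr ^ 2 + di ^ 2)
            - ε ^ 2 * (p * dr + q * di) ^ 2 := by ring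
        _ ≤ _ := by linarith)
    (by
      have h1 : (p * ci - q * cr) ^ 2 ≤ (p ^ 2 + q ^ 2) * (cr ^ 2 + ci ^ 2) := by
        have h0 := sq_nonneg (p * cr + q * ci)
        calc (p * ci - q * cr) ^ 2 = (p ^ 2 + q ^ 2) * (cr ^ 2 + ci ^ 2)
              - (p * cr + q * ci) ^ 2 := by ring
          _ ≤ _ := by linarith
      exact h1.trans (mul_le_mul_of_nonneg_left hC (by positivity)))
    (by
      have := aux_cs8 ![f1, f2, g1, h1, g2, h2, g3, h3] ![p, q, u1, v1, u2, v2, u3, v3]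
      simp [-mul_neg] at this
      rw [hF2, hU]
      refine this.trans (le_of_eq (by ring)))
    (by
      have := aux_cs8 ![f1, f2, g1, h1, g2, h2, g3, h3]
        ![ε * di, -(ε * dr), -(ε * q * x1), ε * p * x1, -(ε * q * x2), ε * p * x2,
          -(ε * q * x3), ε * p * x3]
      simp only [Matrix.cons_val] at this
      rw [hF2]
      refine this.trans (le_of_eq ?_)
      rw [hsx]
      ring)
  rw [← hW] at key
  refine ⟨key.1, le_trans (le_of_eq ?_) key.2⟩
  rw [ep, eq, eu1, ev1, eu2, ev2, eu3, ev3, hU, hcr, hci, hdr, hdi, hsx]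
  field_simp
  ring

/-- Exponential decay of the modified energy (estimate (pf:ene-low-10) in the proof of
Lemma 3.2): with `δ = μ̲/(16β²)`, `ξ ≠ 0`, `|ξ| ≤ 2β/ε`, `V(t) = √(V(t)²)` and
`κ = |ξ|⁴/(Ω²ε² + |ξ|²)`,
`V(t) ≤ e^{−(δ/3)κt} V(0) + 4√(Ω²ε² + |ξ|²) ∫₀ᵗ e^{−(δ/3)κ(t−τ)} |(f̂(τ),ĝ(τ))| dτ`. -/
theorem modified_energy_exponential_decay
    (μ μ' ε Ω β : ℝ) (hμ : 0 < μ) (hμ' : 2 * μ + μ' = 1) (hε : 0 < ε) (hβ : 1 ≤ β)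
    (δ : ℝ) (hδ : δ = min μ 1 / (16 * β ^ 2))
    (ξ : Fin 3 → ℝ) (hξ0 : ξ ≠ 0) (hξ : xiNorm ξ ≤ 2 * β / ε)
    (a a' f : ℝ → ℂ) (u u' g : ℝ → Fin 3 → ℂ)
    (ha : ∀ t : ℝ, 0 ≤ t → HasDerivAt a (a' t) t)
    (hu : ∀ t : ℝ, 0 ≤ t → HasDerivAt u (u' t) t)
    (hf : ContinuousOn f (Set.Ici 0))
    (hg : ContinuousOn g (Set.Ici 0))
    (hsys : ∀ t : ℝ, 0 ≤ t → SystemAt μ μ' ε Ω ξ a a' u u' f g t)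
    (V : ℝ → ℝ)
    (hV : ∀ t : ℝ, V t
      = Real.sqrt ((Ω ^ 2 * ε ^ 2 + xiNormSq ξ) * pairNorm (a t) (u t) ^ 2
          + 2 * δ * xiNormSq ξ
              * (hinner (fun k => Complex.I * (ε : ℂ) * a t * (ξ k : ℂ)) (u t)).re)) :
    ∀ t : ℝ, 0 ≤ t →
      V t ≤ Real.exp (-(δ / 3) * kappa Ω ε ξ * t) * V 0
        + 4 * Real.sqrt (Ω ^ 2 * ε ^ 2 + xiNormSq ξ)
            * ∫ τ in (0:ℝ)..t,
                Real.exp (-(δ / 3) * kappa Ω ε ξ * (t - τ)) * pairNorm (f τ) (g τ) := by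
  have hx0 : 0 < xiNormSq ξ := by
    obtain ⟨k, hk⟩ := Function.ne_iff.1 hξ0
    exact Finset.sum_pos' (fun i _ => sq_nonneg _) ⟨k, Finset.mem_univ k, by
      have : ξ k ≠ 0 := hk
      positivity⟩
  set s := xiNorm ξ with hs_def
  have hs : 0 < s := Real.sqrt_pos.2 hx0
  have hsq : s ^ 2 = xiNormSq ξ := Real.sq_sqrt hx0.le
  have hsx : s ^ 2 = ξ 0 ^ 2 + ξ 1 ^ 2 + ξ 2 ^ 2 := by
    rw [hsq, xiNormSq, Fin.sum_univ_three]
  have hβ0 : 0 < β := by linarith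
  have hse : s * ε ≤ 2 * β := (le_div_iff₀ hε).1 hξ
  have hm0 : 0 < min μ 1 := lt_min hμ one_pos
  have hδ' : δ * (16 * β ^ 2) = min μ 1 := by rw [hδ]; field_simp
  have hmm : min μ 1 = μ ∨ min μ 1 = 1 := min_choice μ 1
  have hμμ : μ + μ' = 1 - μ := by linarith
  set F : ℝ → ℝ := fun t => pairNorm (f t) (g t) with hFdef
  have hF0 : ∀ t, 0 ≤ F t := fun t => Real.sqrt_nonneg _
  have hnsq : ∀ z : ℂ, ‖z‖ ^ 2 = z.re ^ 2 + z.im ^ 2 := by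
    intro z
    rw [Complex.sq_norm, Complex.normSq_apply]; ring
  have hpair : ∀ (z : ℂ) (w : Fin 3 → ℂ), pairNorm z w ^ 2 = z.re ^ 2 + z.im ^ 2
      + ((w 0).re ^ 2 + (w 0).im ^ 2 + (w 1).re ^ 2 + (w 1).im ^ 2
        + (w 2).re ^ 2 + (w 2).im ^ 2) := by
    intro z w
    have h0 : 0 ≤ ‖z‖ ^ 2 + vnormSq w := by
      unfold vnormSq; positivity
    rw [pairNorm, Real.sq_sqrt h0, vnormSq, Fin.sum_univ_three]
    simp only [hnsq]
    ring
  have hFc : ContinuousOn F (Set.Ici 0) := by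
    have hgk : ∀ k, ContinuousOn (fun t => g t k) (Set.Ici 0) := fun k =>
      (continuous_apply k).comp_continuousOn hg
    simp only [hFdef, pairNorm, vnormSq, Fin.sum_univ_three]
    apply ContinuousOn.sqrt
    exact ((hf.norm).pow 2).add
      (((((hgk 0).norm).pow 2).add (((hgk 1).norm).pow 2)).add (((hgk 2).norm).pow 2))
  set W : ℝ → ℝ := fun t => ((Ω * ε) ^ 2 + s ^ 2) * ((a t).re ^ 2 + (a t).im ^ 2
        + ((u t 0).re ^ 2 + (u t 0).im ^ 2 + (u t 1).re ^ 2 + (u t 1).im ^ 2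
          + (u t 2).re ^ 2 + (u t 2).im ^ 2))
      + 2 * δ * s ^ 2 * (ε * ((a t).re * (ξ 0 * (u t 0).im + ξ 1 * (u t 1).im + ξ 2 * (u t 2).im)
        - (a t).im * (ξ 0 * (u t 0).re + ξ 1 * (u t 1).re + ξ 2 * (u t 2).re))) with hWdef
  have hVW : ∀ t, V t = Real.sqrt (W t) := by
    intro t
    rw [hV t, hpair, hWdef]
    congr 1
    simp only [hinner, Fin.sum_univ_three, ← hsq]
    simp
    ring
  set W' : ℝ → ℝ := fun t => 2 * (((Ω * ε) ^ 2 + s ^ 2) * ((a t).re * (a' t).re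
        + (a t).im * (a' t).im
        + ((u t 0).re * (u' t 0).re + (u t 0).im * (u' t 0).im + (u t 1).re * (u' t 1).re
          + (u t 1).im * (u' t 1).im + (u t 2).re * (u' t 2).re + (u t 2).im * (u' t 2).im))
      + δ * s ^ 2 * (ε * ((a' t).re * (ξ 0 * (u t 0).im + ξ 1 * (u t 1).im + ξ 2 * (u t 2).im)
        + (a t).re * (ξ 0 * (u' t 0).im + ξ 1 * (u' t 1).im + ξ 2 * (u' t 2).im)
        - (a' t).im * (ξ 0 * (u t 0).re + ξ 1 * (u t 1).re + ξ 2 * (u t 2).re)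
        - (a t).im * (ξ 0 * (u' t 0).re + ξ 1 * (u' t 1).re + ξ 2 * (u' t 2).re)))) with hW'def
  have hWd : ∀ t, 0 ≤ t → HasDerivAt W (W' t) t := by
    intro t ht
    have hre : ∀ (z : ℝ → ℂ) (z' : ℂ), HasDerivAt z z' t → HasDerivAt (fun t => (z t).re) z'.re t :=
      fun z z' h => Complex.reCLM.hasFDerivAt.comp_hasDerivAt t h
    have him : ∀ (z : ℝ → ℂ) (z' : ℂ), HasDerivAt z z' t → HasDerivAt (fun t => (z t).im) z'.im t :=
      fun z z' h => Complex.imCLM.hasFDerivAt.comp_hasDerivAt t h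
    have huk := hasDerivAt_pi.1 (hu t ht)
    have dp := hre _ _ (ha t ht)
    have dq := him _ _ (ha t ht)
    have d0 := hre _ _ (huk 0)
    have d1 := hre _ _ (huk 1)
    have d2 := hre _ _ (huk 2)
    have e0 := him _ _ (huk 0)
    have e1 := him _ _ (huk 1)
    have e2 := him _ _ (huk 2)
    have hE := ((dp.pow 2).add (dq.pow 2)).add
      ((((((d0.pow 2).add (e0.pow 2)).add (d1.pow 2)).add (e1.pow 2)).add (d2.pow 2)).add
        (e2.pow 2))
    have hdi := ((e0.const_mul (ξ 0)).add (e1.const_mul (ξ 1))).add (e2.const_mul (ξ 2))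
    have hdr := ((d0.const_mul (ξ 0)).add (d1.const_mul (ξ 1))).add (d2.const_mul (ξ 2))
    have hX := ((dp.mul hdi).sub (dq.mul hdr)).const_mul ε
    have hfin := (hE.const_mul ((Ω * ε) ^ 2 + s ^ 2)).add (hX.const_mul (2 * δ * s ^ 2))
    refine hfin.congr_deriv ?_
    simp only [hW'def, Pi.add_apply]
    push_cast
    ring
  have hpt : ∀ t, 0 ≤ t → 0 ≤ W t ∧ W' t / 2
      ≤ - (δ / 3 * (s ^ 4 / ((Ω * ε) ^ 2 + s ^ 2))) * W t
      + 4 * Real.sqrt ((Ω * ε) ^ 2 + s ^ 2) * F t * Real.sqrt (W t) := by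
    intro t ht
    obtain ⟨h1, h2⟩ := hsys t ht
    have hIε : Complex.I / (ε : ℂ) = (1 / ε : ℝ) * Complex.I := by
      push_cast; ring
    rw [hIε] at h1
    simp only [hIε, hμμ, xiDot, Fin.sum_univ_three, ← hsq] at h1 h2
    have k0 := h2 0
    have k1 := h2 1
    have k2 := h2 2
    simp only [cross3, Matrix.cons_val] at k0 k1 k2
    have r := congrArg Complex.re h1
    have i := congrArg Complex.im h1
    have r0 := congrArg Complex.re k0
    have i0 := congrArg Complex.im k0
    have r1 := congrArg Complex.re k1
    have i1 := congrArg Complex.im k1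
    have r2 := congrArg Complex.re k2
    have i2 := congrArg Complex.im k2
    simp only [Complex.add_re, Complex.add_im, Complex.mul_re, Complex.mul_im, Complex.ofReal_re,
      Complex.ofReal_im, Complex.I_re, Complex.I_im, Complex.neg_re, Complex.neg_im,
      Complex.zero_re, Complex.zero_im] at r i r0 i0 r1 i1 r2 i2
    have := aux_pointwise μ (min μ 1) β ε Ω s δ (F t) (ξ 0) (ξ 1) (ξ 2) (a t).re (a t).im
      (u t 0).re (u t 0).im (u t 1).re (u t 1).im (u t 2).re (u t 2).im (f t).re (f t).im
      (g t 0).re (g t 0).im (g t 1).re (g t 1).im (g t 2).re (g t 2).im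
      (a' t).re (a' t).im
      (u' t 0).re (u' t 0).im (u' t 1).re (u' t 1).im (u' t 2).re (u' t 2).im
      hm0 (min_le_right _ _) (min_le_left _ _) hmm hε hβ hδ' hs hse hsx (hF0 t)
      (by rw [hFdef]; simp only; rw [hpair]; ring)
      (by rw [← r]; ring) (by rw [← i]; ring)
      (by rw [← r0]; ring) (by rw [← i0]; ring)
      (by rw [← r1]; ring) (by rw [← i1]; ring)
      (by rw [← r2]; ring) (by rw [← i2]; ring) (W t) rfl
    refine ⟨this.1, le_trans (le_of_eq ?_) this.2⟩
    simp only [hW'def]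
    ring
  have main := aux_sqrt_gronwall W W' (fun t => 4 * Real.sqrt ((Ω * ε) ^ 2 + s ^ 2) * F t)
    (δ / 3 * (s ^ 4 / ((Ω * ε) ^ 2 + s ^ 2))) hWd (fun t ht => (hpt t ht).1)
    (continuousOn_const.mul hFc)
    (fun t _ => mul_nonneg (by positivity) (hF0 t)) (fun t ht => (hpt t ht).2)
  intro t ht
  have hlam : -(δ / 3) * kappa Ω ε ξ = -(δ / 3 * (s ^ 4 / ((Ω * ε) ^ 2 + s ^ 2))) := by
    rw [kappa, ← hs_def, mul_pow]; ring
  rw [hVW, hVW, hlam, ← hsq, ← mul_pow, ← intervalIntegral.integral_const_mul]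
  refine (main t ht).trans (le_of_eq ?_)
  congr 1
  apply intervalIntegral.integral_congr
  intro τ _
  simp only [hFdef]
  ring
end
end
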